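/- (Corollary 1) Let (S,T) be a discrete memoryless correlated source with finite alphabets and joint pmf p(s,t) having no (trivial) common part. Suppose there exist finite-valued auxiliary random variables Q, W1, W2 and channel inputs X1, X2 whose joint distribution with (S,T) factors as p(s,t,q,w1,w2,x1,x2) = p(s,t)·p(q)·p(w1|q)·p(w2|q)·p(x1|s,w1,q)·p(x2|t,w2,q), and let Y1, Y2 be obtained from (X1,X2) through the channel p(y1,y2|x1,x2). If the following seven strict inequalities hold: (1) H(S) < I(S,X1; Y1 | Q,W2); (2) H(T) < I(T,X2; Y2 | Q,W1); (3) H(S)+H(T) < I(S,X1; Y1 | Q,W1,W2) + I(W1,T,X2; Y2 | Q); (4) H(S)+H(T) < I(T,X2; Y2 | Q,W1,W2) + I(W2,S,X1; Y1 | Q); (5) H(S)+H(T) < I(S,W2,X1; Y1 | Q,W1) + I(T,W1,X2; Y2 | Q,W2); (6) 2H(S)+H(T) < I(S,X1; Y1 | Q,W1,W2) + I(S,W2,X1; Y1 | Q) + I(T,W1,X2; Y2 | Q,W2); (7) H(S)+2H(T) < I(T,X2; Y2 | Q,W1,W2) + I(T,W1,X2; Y2 | Q) + I(S,W2,X1;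 Y1 | Q,W1); then the source (S,T) is admissible for the discrete memoryless interference channel p(y1,y2|x1,x2). -/

import Mathlib

/-!
The source is transmitted by a random code of superposition type, without separate source coding.
Fix nonnegative rates `r1, r2`. Given an i.i.d. time-sharing sequence `q`, user `k` partitions its
source sequences at random into about `2 ^ (n * rk)` cells, draws a cloud centre `Wk` for every cell,
and draws a channel input `Xk` for every pair of a source sequence and a cloud centre.

The first receiver decodes `S` uniquely and the cloud index of the second user non-uniquely. Wrong
candidates are of four kinds, recorded by two Booleans: `σ1` says whether the wrong source sequence
lies in a different cell (a fresh cloud centre) or in the correct one, and `σ2` says whether the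
index of the second user is wrong. For each kind there is a likelihood-ratio statistic
(`Model.exists_test`): the total expectation over fresh source sequences is at most one, whereas at
the true variables its logarithm concentrates around `n * (info σ1 σ2 - H(S))`, where `info σ1 σ2` is
the mutual information between the output and the fresh variables given the shared ones. The decoder
tests all four statistics against thresholds. The union bound and Markov's inequality (`oneshot`)
bound the average error, with a factor `1 / M1` for a shared cell and a factor `M2` for a wrong index
of the second user. With Chebyshev's inequality (`chebyshev_lower`) the average error tends to zero
(`Model.decoder`) as soon as, for the four kinds,

* `H(S) - r1 < info false false` and `H(S) - r1 + r2 < info false true`,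
* `H(S) < info true false` and `H(S) + r2 < info true true`.

The second receiver is treated by interchanging the users. A code which is good on average over both
receivers exists by averaging (`Model.admissible`), and the codes serve both receivers at once
because each error probability involves only the marginal channel to that receiver.

It remains to choose the rates. Eliminating `r1` and `r2` from the eight conditions by
Fourier-Motzkin (`exists_rates`) leaves the seven inequalities of the statement; all other
combinations follow from monotonicity of mutual information (`Model.info_le_info`). The informations
`info true _` contain `W1` in addition to the variables in the statement, which only increases
them (`Model.info_bounds`).
-/

/-- Shannon entropy (in bits) of the push-forward of the pmf `p` under the map `f`. -/
noncomputable def margEnt {Ω α : Type*} [Fintype Ω] [Fintype α] [DecidableEq α]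
    (p : Ω → ℝ) (f : Ω → α) : ℝ :=
  ∑ a : α, -((∑ ω : Ω, if f ω = a then p ω else 0) *
      Real.logb 2 (∑ ω : Ω, if f ω = a then p ω else 0))

/-- Conditional entropy H(f | g). -/
noncomputable def condEnt {Ω α β : Type*} [Fintype Ω] [Fintype α] [Fintype β]
    [DecidableEq α] [DecidableEq β] (p : Ω → ℝ) (f : Ω → α) (g : Ω → β) : ℝ :=
  margEnt p (fun ω => (f ω, g ω)) - margEnt p g

/-- Mutual information I(f ; g). -/
noncomputable def mi {Ω α β : Type*} [Fintype Ω] [Fintype α] [Fintype β]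
    [DecidableEq α] [DecidableEq β] (p : Ω → ℝ) (f : Ω → α) (g : Ω → β) : ℝ :=
  margEnt p f + margEnt p g - margEnt p (fun ω => (f ω, g ω))

/-- Conditional mutual information I(f ; g | h). -/
noncomputable def cmi {Ω α β γ : Type*} [Fintype Ω] [Fintype α] [Fintype β] [Fintype γ]
    [DecidableEq α] [DecidableEq β] [DecidableEq γ]
    (p : Ω → ℝ) (f : Ω → α) (g : Ω → β) (h : Ω → γ) : ℝ :=
  margEnt p (fun ω => (f ω, h ω)) + margEnt p (fun ω => (g ω, h ω))
    - margEnt p (fun ω => (f ω, g ω, h ω)) - margEnt p h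

/-- Shannon entropy (in bits) of a pmf. -/
noncomputable def pmfEnt {α : Type*} [Fintype α] (q : α → ℝ) : ℝ :=
  ∑ a : α, -(q a * Real.logb 2 (q a))

/-- Probability of error at decoder 1 of a length-`n` source-channel code for the
interference channel `chan` with source `pST`. -/
noncomputable def icPe1 {S T X1 X2 Y1 Y2 : Type*} [Fintype S] [Fintype T] [Fintype X1]
    [Fintype X2] [Fintype Y1] [Fintype Y2] [DecidableEq S]
    (pST : S → T → ℝ) (chan : X1 → X2 → Y1 → Y2 → ℝ) (n : ℕ)
    (f1 : (Fin n → S) → Fin n → X1) (f2 : (Fin n → T) → Fin n → X2)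
    (φ1 : (Fin n → Y1) → Fin n → S) : ℝ :=
  ∑ sn : Fin n → S, ∑ tn : Fin n → T, ∑ y1n : Fin n → Y1, ∑ y2n : Fin n → Y2,
    if φ1 y1n ≠ sn then
      (∏ i, pST (sn i) (tn i)) * ∏ i, chan (f1 sn i) (f2 tn i) (y1n i) (y2n i)
    else 0

/-- Probability of error at decoder 2. -/
noncomputable def icPe2 {S T X1 X2 Y1 Y2 : Type*} [Fintype S] [Fintype T] [Fintype X1]
    [Fintype X2] [Fintype Y1] [Fintype Y2] [DecidableEq T]
    (pST : S → T → ℝ) (chan : X1 → X2 → Y1 → Y2 → ℝ) (n : ℕ)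
    (f1 : (Fin n → S) → Fin n → X1) (f2 : (Fin n → T) → Fin n → X2)
    (φ2 : (Fin n → Y2) → Fin n → T) : ℝ :=
  ∑ sn : Fin n → S, ∑ tn : Fin n → T, ∑ y1n : Fin n → Y1, ∑ y2n : Fin n → Y2,
    if φ2 y2n ≠ tn then
      (∏ i, pST (sn i) (tn i)) * ∏ i, chan (f1 sn i) (f2 tn i) (y1n i) (y2n i)
    else 0

/-- The source `pST` is admissible for the discrete memoryless interference channel `chan`. -/
def ICAdmissible {S T X1 X2 Y1 Y2 : Type*} [Fintype S] [Fintype T] [Fintype X1]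
    [Fintype X2] [Fintype Y1] [Fintype Y2] [DecidableEq S] [DecidableEq T]
    (pST : S → T → ℝ) (chan : X1 → X2 → Y1 → Y2 → ℝ) : Prop :=
  ∀ ε : ℝ, 0 < ε → ε < 1 → ∃ N : ℕ, ∀ n : ℕ, N ≤ n →
    ∃ (f1 : (Fin n → S) → Fin n → X1) (f2 : (Fin n → T) → Fin n → X2)
      (φ1 : (Fin n → Y1) → Fin n → S) (φ2 : (Fin n → Y2) → Fin n → T),
      max (icPe1 pST chan n f1 f2 φ1) (icPe2 pST chan n f1 f2 φ2) ≤ ε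

/-- The sample space for Corollary 1: source pair, time-sharing/auxiliary variables,
channel inputs and channel outputs. -/
abbrev Omega9 (S T Q W1 W2 X1 X2 Y1 Y2 : Type*) :=
  S × T × Q × W1 × W2 × X1 × X2 × Y1 × Y2

section Proj
variable {S T Q W1 W2 X1 X2 Y1 Y2 : Type*}
def zS  (ω : Omega9 S T Q W1 W2 X1 X2 Y1 Y2) : S := ω.1
def zT  (ω : Omega9 S T Q W1 W2 X1 X2 Y1 Y2) : T := ω.2.1
def zQ  (ω : Omega9 S T Q W1 W2 X1 X2 Y1 Y2) : Q := ω.2.2.1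
def zW1 (ω : Omega9 S T Q W1 W2 X1 X2 Y1 Y2) : W1 := ω.2.2.2.1
def zW2 (ω : Omega9 S T Q W1 W2 X1 X2 Y1 Y2) : W2 := ω.2.2.2.2.1
def zX1 (ω : Omega9 S T Q W1 W2 X1 X2 Y1 Y2) : X1 := ω.2.2.2.2.2.1
def zX2 (ω : Omega9 S T Q W1 W2 X1 X2 Y1 Y2) : X2 := ω.2.2.2.2.2.2.1
def zY1 (ω : Omega9 S T Q W1 W2 X1 X2 Y1 Y2) : Y1 := ω.2.2.2.2.2.2.2.1
def zY2 (ω : Omega9 S T Q W1 W2 X1 X2 Y1 Y2) : Y2 := ω.2.2.2.2.2.2.2.2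
end Proj

/-! ### Marginal laws, conditional mutual information and likelihood ratios -/

section Marginals
variable {Ω α β γ : Type*} [Fintype Ω] [Fintype α] [Fintype β] [Fintype γ]
  [DecidableEq α] [DecidableEq β] [DecidableEq γ]

/-- The law of `f` under the weight `p`. -/
noncomputable def pm (p : Ω → ℝ) (f : Ω → α) (a : α) : ℝ := ∑ ω, if f ω = a then p ω else 0

omit [Fintype α] in
lemma pm_nonneg {p : Ω → ℝ} (hp : ∀ ω, 0 ≤ p ω) (f : Ω → α) (a : α) : 0 ≤ pm p f a :=
  Finset.sum_nonneg fun ω _ => by split_ifs <;> simp [hp]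

omit [Fintype α] in
lemma le_pm {p : Ω → ℝ} (hp : ∀ ω, 0 ≤ p ω) (f : Ω → α) (ω : Ω) : p ω ≤ pm p f (f ω) := by
  have h := Finset.single_le_sum (f := fun ω' => if f ω' = f ω then p ω' else 0)
    (fun ω' _ => by split_ifs <;> simp [hp]) (Finset.mem_univ ω)
  simpa [pm] using h

lemma sum_pm (p : Ω → ℝ) (f : Ω → α) (G : α → ℝ) :
    ∑ a, pm p f a * G a = ∑ ω, p ω * G (f ω) := by
  simp only [pm, Finset.sum_mul]
  rw [Finset.sum_comm]
  refine Finset.sum_congr rfl fun ω _ => ?_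
  simp

lemma margEnt_eq (p : Ω → ℝ) (f : Ω → α) :
    margEnt p f = -∑ ω, p ω * Real.logb 2 (pm p f (f ω)) := by
  rw [← sum_pm p f fun a => Real.logb 2 (pm p f a), ← Finset.sum_neg_distrib]
  rfl

omit [Fintype β] in
lemma pm_comp (p : Ω → ℝ) (f : Ω → α) (e : α → β) :
    pm p (fun ω => e (f ω)) = pm (pm p f) e := by
  funext b
  have h := sum_pm p f fun a => if e a = b then 1 else 0
  simp only [mul_ite, mul_one, mul_zero] at h
  rw [pm, pm, ← h]

lemma margEnt_pm (p : Ω → ℝ) (f : Ω → α) (e : α → β) :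
    margEnt (pm p f) e = margEnt p (fun ω => e (f ω)) := by
  change ∑ b, -(pm (pm p f) e b * Real.logb 2 (pm (pm p f) e b)) =
    ∑ b, -(pm p _ b * Real.logb 2 (pm p _ b))
  rw [pm_comp p f e]

lemma cmi_pm {δ : Type*} [Fintype δ] [DecidableEq δ] (p : Ω → ℝ) (π : Ω → δ)
    (f : δ → α) (g : δ → β) (h : δ → γ) :
    cmi (pm p π) f g h = cmi p (fun ω => f (π ω)) (fun ω => g (π ω)) (fun ω => h (π ω)) := by
  simp only [cmi, margEnt_pm]

/-- Injective relabelling does not change the entropy. -/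
lemma margEnt_injective (p : Ω → ℝ) (f : Ω → α) (e : α → β) (he : Function.Injective e) :
    margEnt p (fun ω => e (f ω)) = margEnt p f := by
  rw [margEnt_eq, margEnt_eq]
  simp only [pm, he.eq_iff]

/-- Conditional mutual information is nonnegative: apply `1 - 1 / x ≤ log x` to the
conditional likelihood ratio, the expected inverse of which is at most one. -/
lemma cmi_nonneg {p : Ω → ℝ} (hp : ∀ ω, 0 ≤ p ω)
    (f : Ω → α) (g : Ω → β) (h : Ω → γ) : 0 ≤ cmi p f g h := by
  set A := pm p (fun ω => (f ω, h ω)) with hA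
  set B := pm p (fun ω => (g ω, h ω)) with hB
  set C := pm p (fun ω => (f ω, g ω, h ω)) with hC
  set D := pm p h with hD
  have hA0 : ∀ a, 0 ≤ A a := fun a => pm_nonneg hp _ a
  have hB0 : ∀ a, 0 ≤ B a := fun a => pm_nonneg hp _ a
  have hC0 : ∀ a, 0 ≤ C a := fun a => pm_nonneg hp _ a
  have hD0 : ∀ a, 0 ≤ D a := fun a => pm_nonneg hp _ a
  have e : cmi p f g h = ∑ ω, p ω * (Real.logb 2 (C (f ω, g ω, h ω)) + Real.logb 2 (D (h ω))
      - Real.logb 2 (A (f ω, h ω)) - Real.logb 2 (B (g ω, h ω))) := by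
    simp only [cmi, margEnt_eq, mul_add, mul_sub, Finset.sum_add_distrib, Finset.sum_sub_distrib]
    simp only [hA, hB, hC, hD]
    ring
  have key : ∀ ω, p ω * (1 - A (f ω, h ω) * B (g ω, h ω) / (C (f ω, g ω, h ω) * D (h ω))) ≤
      Real.log 2 * (p ω * (Real.logb 2 (C (f ω, g ω, h ω)) + Real.logb 2 (D (h ω))
      - Real.logb 2 (A (f ω, h ω)) - Real.logb 2 (B (g ω, h ω)))) := by
    intro ω
    rcases (hp ω).eq_or_lt with h0 | h0
    · simp [← h0]
    · have a1 : 0 < A (f ω, h ω) := h0.trans_le (le_pm hp (fun ω => (f ω, h ω)) ω)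
      have b1 : 0 < B (g ω, h ω) := h0.trans_le (le_pm hp (fun ω => (g ω, h ω)) ω)
      have c1 : 0 < C (f ω, g ω, h ω) := h0.trans_le (le_pm hp (fun ω => (f ω, g ω, h ω)) ω)
      have d1 : 0 < D (h ω) := h0.trans_le (le_pm hp h ω)
      have l2 : 0 < Real.log 2 := Real.log_pos one_lt_two
      have hh := Real.log_le_sub_one_of_pos
        (show 0 < A (f ω, h ω) * B (g ω, h ω) / (C (f ω, g ω, h ω) * D (h ω)) by positivity)
      rw [Real.log_div (by positivity) (by positivity), Real.log_mul a1.ne' b1.ne',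
        Real.log_mul c1.ne' d1.ne'] at hh
      have : Real.log 2 * (p ω * (Real.logb 2 (C (f ω, g ω, h ω)) + Real.logb 2 (D (h ω))
          - Real.logb 2 (A (f ω, h ω)) - Real.logb 2 (B (g ω, h ω)))) =
          p ω * (Real.log (C (f ω, g ω, h ω)) + Real.log (D (h ω))
          - Real.log (A (f ω, h ω)) - Real.log (B (g ω, h ω))) := by
        simp only [Real.logb]; field_simp
      rw [this]
      exact mul_le_mul_of_nonneg_left (by linarith) h0.le
  have sA : ∀ c, ∑ a, A (a, c) = D c := by
    intro c
    simp only [hA, hD, pm, Prod.mk.injEq, ite_and]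
    rw [Finset.sum_comm]; simp
  have sB : ∀ c, ∑ a, B (a, c) = D c := by
    intro c
    simp only [hB, hD, pm, Prod.mk.injEq, ite_and]
    rw [Finset.sum_comm]; simp
  have bound : ∑ ω, p ω * (A (f ω, h ω) * B (g ω, h ω) / (C (f ω, g ω, h ω) * D (h ω))) ≤
      ∑ ω, p ω := by
    rw [← sum_pm p (fun ω => (f ω, g ω, h ω))
      (fun z => A (z.1, z.2.2) * B (z.2.1, z.2.2) / (C z * D z.2.2))]
    have s1 : ∑ ω, p ω = ∑ c, D c := by
      have := sum_pm p h fun _ => 1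
      simpa using this.symm
    calc ∑ z, C z * (A (z.1, z.2.2) * B (z.2.1, z.2.2) / (C z * D z.2.2))
        ≤ ∑ z : α × β × γ, A (z.1, z.2.2) * B (z.2.1, z.2.2) / D z.2.2 := by
          refine Finset.sum_le_sum fun z _ => ?_
          rcases (hC0 z).eq_or_lt with h0 | h0
          · rw [← h0, zero_mul]
            exact div_nonneg (mul_nonneg (hA0 _) (hB0 _)) (hD0 _)
          · apply le_of_eq; field_simp
      _ = ∑ c, (∑ a, A (a, c)) * (∑ b, B (b, c)) / D c := by
          simp only [Fintype.sum_prod_type]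
          rw [Finset.sum_congr rfl fun a _ => Finset.sum_comm, Finset.sum_comm]
          simp only [Finset.sum_mul_sum, Finset.sum_div]
      _ = ∑ c, D c := by
          refine Finset.sum_congr rfl fun c _ => ?_
          rw [sA, sB]
          rcases (hD0 c).eq_or_lt with h0 | h0
          · simp [← h0]
          · field_simp
      _ = ∑ ω, p ω := s1.symm
  have tot : 0 ≤ Real.log 2 * cmi p f g h := by
    rw [e, Finset.mul_sum]
    refine le_trans ?_ (Finset.sum_le_sum fun ω _ => key ω)
    simp only [mul_sub, mul_one, Finset.sum_sub_distrib]
    linarith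
  exact nonneg_of_mul_nonneg_right tot (Real.log_pos one_lt_two)

/-- Chain rule combined with nonnegativity: moving a variable from the condition to the first
argument cannot decrease the conditional mutual information. -/
lemma cmi_le_cmi {p : Ω → ℝ} (hp : ∀ ω, 0 ≤ p ω) {α' γ' δ : Type*}
    [Fintype α'] [Fintype γ'] [Fintype δ] [DecidableEq α'] [DecidableEq γ'] [DecidableEq δ]
    (f : Ω → α) (g : Ω → β) (h : Ω → γ) (w : Ω → δ) (f' : Ω → α') (h' : Ω → γ')
    (ef : α × δ → α') (hef : Function.Injective ef) (hf : ∀ ω, f' ω = ef (f ω, w ω))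
    (eh : γ × δ → γ') (heh : Function.Injective eh) (hh : ∀ ω, h' ω = eh (h ω, w ω)) :
    cmi p f g h' ≤ cmi p f' g h := by
  have h0 := cmi_nonneg hp w g h
  obtain rfl : f' = fun ω => ef (f ω, w ω) := funext hf
  obtain rfl : h' = fun ω => eh (h ω, w ω) := funext hh
  unfold cmi at h0 ⊢
  have e1 : margEnt p (fun ω => (f ω, eh (h ω, w ω))) = margEnt p (fun ω => (f ω, w ω, h ω)) :=
    margEnt_injective p (fun ω => (f ω, w ω, h ω)) (fun z => (z.1, eh (z.2.2, z.2.1)))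
      (by rintro ⟨a, b, c⟩ ⟨a', b', c'⟩ h; simp only [Prod.mk.injEq, heh.eq_iff] at h ⊢; tauto)
  have e2 : margEnt p (fun ω => (g ω, eh (h ω, w ω))) = margEnt p (fun ω => (w ω, g ω, h ω)) :=
    margEnt_injective p (fun ω => (w ω, g ω, h ω)) (fun z => (z.2.1, eh (z.2.2, z.1)))
      (by rintro ⟨a, b, c⟩ ⟨a', b', c'⟩ h; simp only [Prod.mk.injEq, heh.eq_iff] at h ⊢; tauto)
  have e3 : margEnt p (fun ω => (f ω, g ω, eh (h ω, w ω))) =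
      margEnt p (fun ω => (f ω, w ω, g ω, h ω)) :=
    margEnt_injective p (fun ω => (f ω, w ω, g ω, h ω))
      (fun z => (z.1, z.2.2.1, eh (z.2.2.2, z.2.1)))
      (by
        rintro ⟨a, b, c, d⟩ ⟨a', b', c', d'⟩ h
        simp only [Prod.mk.injEq, heh.eq_iff] at h ⊢; tauto)
  have e4 : margEnt p (fun ω => eh (h ω, w ω)) = margEnt p (fun ω => (w ω, h ω)) :=
    margEnt_injective p (fun ω => (w ω, h ω)) (fun z => eh (z.2, z.1))
      (by rintro ⟨a, b⟩ ⟨a', b'⟩ h; simp only [Prod.mk.injEq, heh.eq_iff] at h ⊢; tauto)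
  have e5 : margEnt p (fun ω => (ef (f ω, w ω), h ω)) = margEnt p (fun ω => (f ω, w ω, h ω)) :=
    margEnt_injective p (fun ω => (f ω, w ω, h ω)) (fun z => (ef (z.1, z.2.1), z.2.2))
      (by rintro ⟨a, b, c⟩ ⟨a', b', c'⟩ h; simp only [Prod.mk.injEq, hef.eq_iff] at h ⊢; tauto)
  have e6 : margEnt p (fun ω => (ef (f ω, w ω), g ω, h ω)) =
      margEnt p (fun ω => (f ω, w ω, g ω, h ω)) :=
    margEnt_injective p (fun ω => (f ω, w ω, g ω, h ω))
      (fun z => (ef (z.1, z.2.1), z.2.2.1, z.2.2.2))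
      (by
        rintro ⟨a, b, c, d⟩ ⟨a', b', c', d'⟩ h
        simp only [Prod.mk.injEq, hef.eq_iff] at h ⊢; tauto)
  linarith

/-- The likelihood-ratio statistic `P(f,g,h) P(h) σ(f) / (P(f,h) P(g,h))`: the exponential of the
conditional information density of `f` and `g` given `h`, weighted by a source probability. -/
noncomputable def ratio (p : Ω → ℝ) (f : Ω → α) (g : Ω → β) (h : Ω → γ) (σ : α → ℝ)
    (a : α) (b : β) (c : γ) : ℝ :=
  pm p (fun ω => (f ω, g ω, h ω)) (a, b, c) * pm p h c * σ a /
    (pm p (fun ω => (f ω, h ω)) (a, c) * pm p (fun ω => (g ω, h ω)) (b, c))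

omit [Fintype α] [Fintype β] [Fintype γ] in
lemma ratio_nonneg {p : Ω → ℝ} (hp : ∀ ω, 0 ≤ p ω) (f : Ω → α) (g : Ω → β) (h : Ω → γ)
    {σ : α → ℝ} (hσ : ∀ a, 0 ≤ σ a) (a : α) (b : β) (c : γ) : 0 ≤ ratio p f g h σ a b c := by
  have := pm_nonneg hp (fun ω => (f ω, g ω, h ω)) (a, b, c)
  have := pm_nonneg hp h c
  have := pm_nonneg hp (fun ω => (f ω, h ω)) (a, c)
  have := pm_nonneg hp (fun ω => (g ω, h ω)) (b, c)
  have := hσ a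
  unfold ratio
  positivity

omit [Fintype α] [Fintype β] [Fintype γ] in
lemma ratio_pos {p : Ω → ℝ} (hp : ∀ ω, 0 ≤ p ω) (f : Ω → α) (g : Ω → β) (h : Ω → γ)
    {σ : α → ℝ} {ω : Ω} (h0 : 0 < p ω) (hσ : 0 < σ (f ω)) :
    0 < ratio p f g h σ (f ω) (g ω) (h ω) := by
  have := h0.trans_le (le_pm hp (fun ω => (f ω, g ω, h ω)) ω)
  have := h0.trans_le (le_pm hp h ω)
  have := h0.trans_le (le_pm hp (fun ω => (f ω, h ω)) ω)
  have := h0.trans_le (le_pm hp (fun ω => (g ω, h ω)) ω)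
  unfold ratio
  positivity

/-- When the weight `σ (f ω)` is the probability of `z ω`, the expected logarithm of `ratio` is a
conditional mutual information minus the entropy of `z`. -/
lemma expect_log_ratio {δ : Type*} [Fintype δ] [DecidableEq δ] {p : Ω → ℝ}
    (hp : ∀ ω, 0 ≤ p ω) (f : Ω → α) (g : Ω → β)
    (h : Ω → γ) (σ : α → ℝ) (z : Ω → δ) (hσ : ∀ ω, σ (f ω) = pm p z (z ω)) :
    ∑ ω, p ω * Real.logb 2 (ratio p f g h σ (f ω) (g ω) (h ω)) = cmi p f g h - margEnt p z := by
  have e : cmi p f g h - margEnt p z = ∑ ω, p ω *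
      (Real.logb 2 (pm p (fun ω => (f ω, g ω, h ω)) (f ω, g ω, h ω)) +
        Real.logb 2 (pm p h (h ω)) + Real.logb 2 (pm p z (z ω))
      - Real.logb 2 (pm p (fun ω => (f ω, h ω)) (f ω, h ω))
      - Real.logb 2 (pm p (fun ω => (g ω, h ω)) (g ω, h ω))) := by
    simp only [cmi, margEnt_eq, mul_add, mul_sub, Finset.sum_add_distrib, Finset.sum_sub_distrib]
    ring
  rw [e]
  refine Finset.sum_congr rfl fun ω _ => ?_
  rcases (hp ω).eq_or_lt with h0 | h0
  · simp [← h0]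
  · have h1 := h0.trans_le (le_pm hp (fun ω => (f ω, g ω, h ω)) ω)
    have h2 := h0.trans_le (le_pm hp h ω)
    have h3 := h0.trans_le (le_pm hp (fun ω => (f ω, h ω)) ω)
    have h4 := h0.trans_le (le_pm hp (fun ω => (g ω, h ω)) ω)
    have h5 := h0.trans_le (le_pm hp z ω)
    rw [ratio, hσ, Real.logb_div (by positivity) (by positivity), Real.logb_mul (by positivity)
      (by positivity), Real.logb_mul (by positivity) (by positivity), Real.logb_mul (by positivity)
      (by positivity)]
    ring

/-- Change of measure: if `f` is redrawn from the kernel `κ` given `h`, independently of `g` and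
without the source weight `σ`, the statistic `ratio` has total expectation at most one. -/
lemma expect_ratio_le {p : Ω → ℝ} (hp : ∀ ω, 0 ≤ p ω) (hp1 : ∑ ω, p ω = 1)
    (f : Ω → α) (g : Ω → β) (h : Ω → γ) (σ : α → ℝ) (κ : γ → α → ℝ)
    (hκ : ∀ a c, pm p (fun ω => (f ω, h ω)) (a, c) = pm p h c * (σ a * κ c a)) :
    ∑ ω, p ω * ∑ a, κ (h ω) a * ratio p f g h σ a (g ω) (h ω) ≤ 1 := by
  set C := pm p (fun ω => (f ω, g ω, h ω)) with hC
  have hC0 : ∀ a, 0 ≤ C a := fun a => pm_nonneg hp _ a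
  have s1 : ∑ z, C z = 1 := by
    have := sum_pm p (fun ω => (f ω, g ω, h ω)) fun _ => 1
    simpa [hp1] using this
  rw [← sum_pm p (fun ω => (g ω, h ω))
    (fun z => ∑ a, κ z.2 a * ratio p f g h σ a z.1 z.2), ← s1, Fintype.sum_prod_type C]
  simp only [Finset.mul_sum]
  rw [Finset.sum_comm]
  refine Finset.sum_le_sum fun a _ => Finset.sum_le_sum fun z _ => ?_
  obtain ⟨b, c⟩ := z
  have hB := pm_nonneg hp (fun ω => (g ω, h ω)) (b, c)
  have hA := pm_nonneg hp (fun ω => (f ω, h ω)) (a, c)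
  rcases hB.eq_or_lt with h0 | h0
  · rw [← h0, zero_mul]; exact hC0 _
  rcases hA.eq_or_lt with h2 | h2
  · simp only [ratio]
    rw [← h2, zero_mul, div_zero, mul_zero, mul_zero]; exact hC0 _
  · apply le_of_eq
    have h3 := hκ a c
    have : pm p (fun ω => (g ω, h ω)) (b, c) * (κ c a * ratio p f g h σ a b c) =
        C (a, b, c) * (pm p h c * (σ a * κ c a)) / pm p (fun ω => (f ω, h ω)) (a, c) := by
      rw [ratio, hC]; field_simp
    rw [this, ← h3]
    field_simp

end Marginals

/-! ### Product laws, the law of large numbers and random codes -/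

section Products
variable {ι α : Type*} [Fintype ι] [DecidableEq ι] [Fintype α]

lemma sum_pi_prod (k : ι → α → ℝ) : ∑ e : ι → α, ∏ i, k i (e i) = ∏ i, ∑ a, k i a := by
  rw [Finset.prod_univ_sum, Fintype.piFinset_univ]

/-- The marginal law of one coordinate of a product law. -/
lemma sum_pi_one {k : ι → α → ℝ} (hk : ∀ i, ∑ a, k i a = 1) (i : ι) (F : α → ℝ) :
    ∑ e : ι → α, (∏ l, k l (e l)) * F (e i) = ∑ a, k i a * F a := by
  have h := sum_pi_prod fun l a => k l a * (if l = i then F a else 1)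
  have h1 : ∀ e : ι → α, ∏ l, k l (e l) * (if l = i then F (e l) else 1) =
      (∏ l, k l (e l)) * F (e i) := by
    intro e
    rw [Finset.prod_mul_distrib, Finset.prod_ite_eq']
    simp
  simp only [h1] at h
  rw [h, Fintype.prod_eq_single i]
  · simp
  · intro l hl
    simp [hl, hk]

lemma sum_pi_mul {k : ι → α → ℝ} (hk : ∀ i, ∑ a, k i a = 1) {i j : ι} (hij : i ≠ j)
    (F G : α → ℝ) :
    ∑ e : ι → α, (∏ l, k l (e l)) * (F (e i) * G (e j)) =
      (∑ a, k i a * F a) * ∑ a, k j a * G a := by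
  have h := sum_pi_prod fun l a =>
    k l a * ((if l = i then F a else 1) * (if l = j then G a else 1))
  have h1 : ∀ e : ι → α,
      ∏ l, k l (e l) * ((if l = i then F (e l) else 1) * (if l = j then G (e l) else 1)) =
      (∏ l, k l (e l)) * (F (e i) * G (e j)) := by
    intro e
    rw [Finset.prod_mul_distrib, Finset.prod_mul_distrib, Finset.prod_ite_eq', Finset.prod_ite_eq']
    simp
  simp only [h1] at h
  rw [h, Fintype.prod_eq_mul i j hij]
  · simp [hij, hij.symm]
  · intro l hl
    simp [hl.1, hl.2, hk]

/-- The marginal law of two distinct coordinates of a product law. -/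
lemma sum_pi_two {k : ι → α → ℝ} (hk : ∀ i, ∑ a, k i a = 1) {i j : ι} (hij : i ≠ j)
    (F : α → α → ℝ) :
    ∑ e : ι → α, (∏ l, k l (e l)) * F (e i) (e j) = ∑ a, k i a * ∑ b, k j b * F a b := by
  classical
  have h : ∀ e : ι → α, (∏ l, k l (e l)) * F (e i) (e j) =
      ∑ a, (∏ l, k l (e l)) * ((if e i = a then 1 else 0) * F a (e j)) := by
    intro e
    rw [← Finset.mul_sum]
    simp
  simp only [h]
  rw [Finset.sum_comm]
  refine Finset.sum_congr rfl fun a _ => ?_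
  rw [sum_pi_mul hk hij (fun x => if x = a then 1 else 0) (F a)]
  simp

end Products

section Chebyshev
variable {Ω : Type*} [Fintype Ω]

/-- The variance of a sum of independent copies of a centred variable: the mixed terms vanish. -/
lemma second_moment {p : Ω → ℝ} (hp1 : ∑ ω, p ω = 1) {X : Ω → ℝ} (hX : ∑ ω, p ω * X ω = 0)
    (n : ℕ) :
    ∑ z : Fin n → Ω, (∏ i, p (z i)) * (∑ i, X (z i)) ^ 2 = n * ∑ ω, p ω * X ω ^ 2 := by
  have hk : ∀ _ : Fin n, ∑ a, p a = 1 := fun _ => hp1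
  have h : ∀ i j : Fin n, ∑ z : Fin n → Ω, (∏ i, p (z i)) * (X (z i) * X (z j)) =
      if i = j then ∑ ω, p ω * X ω ^ 2 else 0 := by
    intro i j
    split_ifs with hij
    · subst hij
      rw [sum_pi_one (k := fun _ => p) hk i fun x => X x * X x]
      simp only [sq]
    · rw [sum_pi_mul (k := fun _ => p) hk hij X X, hX, zero_mul]
  have e : ∀ z : Fin n → Ω, (∏ i, p (z i)) * (∑ i, X (z i)) ^ 2 =
      ∑ i, ∑ j, (∏ i, p (z i)) * (X (z i) * X (z j)) := by
    intro z
    rw [sq, Finset.sum_mul_sum, Finset.mul_sum]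
    simp only [Finset.mul_sum]
  simp only [e]
  rw [Finset.sum_comm]
  rw [Finset.sum_congr rfl fun i _ => Finset.sum_comm]
  simp [h]

/-- Weak law of large numbers with an explicit rate, by Chebyshev. -/
lemma chebyshev_lower {p : Ω → ℝ} (hp : ∀ ω, 0 ≤ p ω) (hp1 : ∑ ω, p ω = 1) (X : Ω → ℝ)
    {δ : ℝ} (hδ : 0 < δ) :
    ∃ C : ℝ, ∀ n : ℕ, 0 < n → ∑ z : Fin n → Ω, (∏ i, p (z i)) *
      (if ∑ i, X (z i) < n * ((∑ ω, p ω * X ω) - δ) then 1 else 0) ≤ C / n := by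
  set μ := ∑ ω, p ω * X ω with hμ
  refine ⟨(∑ ω, p ω * (X ω - μ) ^ 2) / δ ^ 2, fun n hn => ?_⟩
  have hn' : (0 : ℝ) < n := by exact_mod_cast hn
  have h0 : ∑ ω, p ω * (X ω - μ) = 0 := by
    simp only [mul_sub, Finset.sum_sub_distrib, ← Finset.sum_mul, hp1, one_mul]
    rw [← hμ, sub_self]
  have h2 := second_moment hp1 h0 n
  have hpt : ∀ z : Fin n → Ω, (∏ i, p (z i)) *
      (if ∑ i, X (z i) < n * (μ - δ) then 1 else 0) ≤
      ((∏ i, p (z i)) * (∑ i, (X (z i) - μ)) ^ 2) * (1 / (n * δ) ^ 2) := by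
    intro z
    have hz : 0 ≤ ∏ i, p (z i) := Finset.prod_nonneg fun i _ => hp _
    rw [mul_assoc]
    refine mul_le_mul_of_nonneg_left ?_ hz
    split_ifs with h
    · have e : ∑ i, (X (z i) - μ) = ∑ i, X (z i) - n * μ := by
        simp [Finset.sum_sub_distrib]
      rw [mul_one_div, one_le_div (by positivity), e]
      have h3 : n * δ ≤ -(∑ i, X (z i) - n * μ) := by nlinarith
      have h4 : (0 : ℝ) ≤ n * δ := by positivity
      nlinarith
    · positivity
  refine (Finset.sum_le_sum fun z _ => hpt z).trans ?_
  rw [← Finset.sum_mul, h2]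
  apply le_of_eq
  field_simp

end Chebyshev

section RandomCode
variable {S W X : Type*} [Fintype S] [Fintype W] [Fintype X]
  [DecidableEq S] [DecidableEq W] [DecidableEq X] {M : ℕ}

/-- The random code of one user, for a fixed time-sharing sequence: a partition of the source
words into `M` cells, a cloud centre for each cell, and a channel input for each pair
(source word, cloud centre). -/
abbrev Code (S W X : Type*) (M : ℕ) := (S → Fin M) × (Fin M → W) × (S × W → X)

/-- The cell of a source word. -/
def Code.bin (c : Code S W X M) (s : S) : Fin M := c.1 s
/-- The cloud centre with index `j`. -/
def Code.cloud (c : Code S W X M) (j : Fin M) : W := c.2.1 j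
/-- The cloud centre of a source word. -/
def Code.aux (c : Code S W X M) (s : S) : W := c.cloud (c.bin s)
/-- The channel input of a source word. -/
def Code.enc (c : Code S W X M) (s : S) : X := c.2.2 (s, c.aux s)

/-- The probability of a code: uniform independent cells, i.i.d. cloud centres, and independent
channel inputs drawn from the kernel `pX`. -/
noncomputable def Code.wt (pW : W → ℝ) (pX : S → W → X → ℝ) (c : Code S W X M) : ℝ :=
  (∏ _s : S, (M : ℝ)⁻¹) * ((∏ i, pW (c.2.1 i)) * ∏ z : S × W, pX z.1 z.2 (c.2.2 z))

variable {pW : W → ℝ} {pX : S → W → X → ℝ}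

omit [DecidableEq S] [DecidableEq W] [Fintype X] [DecidableEq X] in
lemma Code.wt_nonneg (hW : ∀ w, 0 ≤ pW w) (hX : ∀ s w x, 0 ≤ pX s w x) (c : Code S W X M) :
    0 ≤ c.wt pW pX :=
  mul_nonneg (Finset.prod_nonneg fun _ _ => by positivity)
    (mul_nonneg (Finset.prod_nonneg fun _ _ => hW _) (Finset.prod_nonneg fun _ _ => hX _ _ _))

omit [DecidableEq X] in
lemma Code.sum_wt_mul (F : (S → Fin M) → (Fin M → W) → (S × W → X) → ℝ) :
    ∑ c : Code S W X M, c.wt pW pX * F c.1 c.2.1 c.2.2 =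
      ∑ b : S → Fin M, (∏ _s : S, (M : ℝ)⁻¹) * ∑ d : Fin M → W, (∏ i, pW (d i)) *
        ∑ e : S × W → X, (∏ z, pX z.1 z.2 (e z)) * F b d e := by
  simp only [Code.wt, Fintype.sum_prod_type, Finset.mul_sum, mul_assoc]

lemma sum_inv_fin [NeZero M] : ∑ _i : Fin M, (M : ℝ)⁻¹ = 1 := by
  have : (M : ℝ) ≠ 0 := Nat.cast_ne_zero.mpr (NeZero.ne M)
  simp [this]

omit [DecidableEq X] in
lemma Code.sum_wt [NeZero M] (hW1 : ∑ w, pW w = 1) (hX1 : ∀ s w, ∑ x, pX s w x = 1) :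
    ∑ c : Code S W X M, c.wt pW pX = 1 := by
  have h := Code.sum_wt_mul (M := M) (pW := pW) (pX := pX) fun _ _ _ => 1
  simp only [mul_one] at h
  rw [h]
  rw [sum_pi_prod fun (z : S × W) x => pX z.1 z.2 x]
  simp only [hX1, Finset.prod_const_one, mul_one]
  rw [sum_pi_prod fun (_ : Fin M) w => pW w]
  simp only [hW1, Finset.prod_const_one, mul_one]
  rw [sum_pi_prod fun (_ : S) (_ : Fin M) => (M : ℝ)⁻¹]
  simp

omit [DecidableEq X] in
/-- A bound on the joint law of the codewords of two distinct source words, split according to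
whether their cells differ (`σ = true`) or agree (`σ = false`). In the former case the cloud centres
are independent; the latter has probability `1 / M`, and the cloud centre is shared. -/
lemma Code.pair_le [NeZero M] (hW : ∀ w, 0 ≤ pW w) (hW1 : ∑ w, pW w = 1)
    (hX : ∀ s w x, 0 ≤ pX s w x) (hX1 : ∀ s w, ∑ x, pX s w x = 1)
    {s s2 : S} (hs : s ≠ s2) (σ : Bool) (F : W → X → W → X → ℝ)
    (hF : ∀ w x w2 x2, 0 ≤ F w x w2 x2) :
    ∑ c : Code S W X M, c.wt pW pX * (if decide (c.bin s2 ≠ c.bin s) = σ then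
        F (c.aux s) (c.enc s) (c.aux s2) (c.enc s2) else 0) ≤
      (cond σ 1 (M : ℝ)⁻¹) * ∑ w, ∑ w2, ∑ x, ∑ x2, pW w * pW w2 * pX s w x *
        pX s2 (cond σ w2 w) x2 * F w x (cond σ w2 w) x2 := by
  have hM : (M : ℝ) ≠ 0 := Nat.cast_ne_zero.mpr (NeZero.ne M)
  set H : W → W → ℝ := fun w w2 => ∑ x, pX s w x * ∑ x2, pX s2 w2 x2 * F w x w2 x2 with hH
  have hH0 : ∀ w w2, 0 ≤ H w w2 := fun w w2 => Finset.sum_nonneg fun x _ =>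
    mul_nonneg (hX _ _ _) (Finset.sum_nonneg fun x2 _ => mul_nonneg (hX _ _ _) (hF _ _ _ _))
  set R : ℝ := ∑ w, pW w * ∑ w2, pW w2 * H w (cond σ w2 w) with hR
  have hR0 : 0 ≤ R := Finset.sum_nonneg fun w _ => mul_nonneg (hW _)
    (Finset.sum_nonneg fun w2 _ => mul_nonneg (hW _) (hH0 _ _))
  have hRR : ∑ w, ∑ w2, ∑ x, ∑ x2, pW w * pW w2 * pX s w x *
        pX s2 (cond σ w2 w) x2 * F w x (cond σ w2 w) x2 = R := by
    simp only [hR, hH, Finset.mul_sum, mul_assoc]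
  rw [hRR]
  have h := Code.sum_wt_mul (M := M) (pW := pW) (pX := pX)
    fun b d e => if decide (b s2 ≠ b s) = σ then
      F (d (b s)) (e (s, d (b s))) (d (b s2)) (e (s2, d (b s2))) else 0
  refine (le_of_eq h).trans ?_
  have inner : ∀ (b : S → Fin M) (d : Fin M → W), ∑ e : S × W → X, (∏ z, pX z.1 z.2 (e z)) *
      (if decide (b s2 ≠ b s) = σ then
        F (d (b s)) (e (s, d (b s))) (d (b s2)) (e (s2, d (b s2))) else 0) =
      if decide (b s2 ≠ b s) = σ then H (d (b s)) (d (b s2)) else 0 := by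
    intro b d
    split_ifs with hb
    · exact sum_pi_two (k := fun z x => pX z.1 z.2 x) (fun z => hX1 _ _)
        (i := (s, d (b s))) (j := (s2, d (b s2))) (by simp [hs])
        fun x x2 => F (d (b s)) x (d (b s2)) x2
    · simp
  have mid : ∀ b : S → Fin M, ∑ d : Fin M → W, (∏ i, pW (d i)) *
      (if decide (b s2 ≠ b s) = σ then H (d (b s)) (d (b s2)) else 0) =
      if decide (b s2 ≠ b s) = σ then R else 0 := by
    intro b
    split_ifs with hb
    · cases σ with
      | false =>
        have hb2 : b s2 = b s := by simpa using hb
        rw [hb2, sum_pi_one (k := fun _ => pW) (fun _ => hW1) (b s) fun w => H w w]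
        simp [hR, ← Finset.sum_mul, hW1]
      | true =>
        have hb2 : b s ≠ b s2 := by simpa using (Ne.symm (by simpa using hb))
        rw [sum_pi_two (k := fun _ => pW) (fun _ => hW1) hb2 H]
        simp [hR]
    · simp
  simp only [inner, mid]
  rw [sum_pi_two (k := fun (_ : S) (_ : Fin M) => (M : ℝ)⁻¹) (fun _ => sum_inv_fin) hs
    fun i j => if decide (j ≠ i) = σ then R else 0]
  cases σ with
  | false =>
    apply le_of_eq
    simp [hM]
  | true =>
    refine (Finset.sum_le_sum fun i _ => mul_le_mul_of_nonneg_left (Finset.sum_le_sum fun j _ =>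
      mul_le_mul_of_nonneg_left (show _ ≤ R by split_ifs <;> simp [hR0]) (by positivity))
      (by positivity)).trans ?_
    simp [hM]

omit [DecidableEq X] in
/-- A bound on the joint law of the codeword of a source word and a cloud centre, the latter either
its own (`σ = false`) or summed over all the others (`σ = true`), of which there are at most `M`. -/
lemma Code.cloud_le [NeZero M] (hW : ∀ w, 0 ≤ pW w) (hW1 : ∑ w, pW w = 1)
    (hX : ∀ s w x, 0 ≤ pX s w x) (hX1 : ∀ s w, ∑ x, pX s w x = 1)
    (s : S) (σ : Bool) (F : W → X → W → ℝ) (hF : ∀ w x w2, 0 ≤ F w x w2) :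
    ∑ c : Code S W X M, c.wt pW pX * ∑ j, (if decide (j ≠ c.bin s) = σ then
        F (c.aux s) (c.enc s) (c.cloud j) else 0) ≤
      (cond σ (M : ℝ) 1) * ∑ w, ∑ w2, ∑ x, pW w * pW w2 * pX s w x * F w x (cond σ w2 w) := by
  have hM : (M : ℝ) ≠ 0 := Nat.cast_ne_zero.mpr (NeZero.ne M)
  set H : W → W → ℝ := fun w w2 => ∑ x, pX s w x * F w x w2 with hH
  have hH0 : ∀ w w2, 0 ≤ H w w2 := fun w w2 => Finset.sum_nonneg fun x _ =>
    mul_nonneg (hX _ _ _) (hF _ _ _)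
  set R : ℝ := ∑ w, pW w * ∑ w2, pW w2 * H w (cond σ w2 w) with hR
  have hR0 : 0 ≤ R := Finset.sum_nonneg fun w _ => mul_nonneg (hW _)
    (Finset.sum_nonneg fun w2 _ => mul_nonneg (hW _) (hH0 _ _))
  have hRR : ∑ w, ∑ w2, ∑ x, pW w * pW w2 * pX s w x * F w x (cond σ w2 w) = R := by
    simp only [hR, hH, Finset.mul_sum, mul_assoc]
  rw [hRR]
  have h := Code.sum_wt_mul (M := M) (pW := pW) (pX := pX)
    fun b d e => ∑ j, if decide (j ≠ b s) = σ then F (d (b s)) (e (s, d (b s))) (d j) else 0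
  refine (le_of_eq h).trans ?_
  have inner : ∀ (b : S → Fin M) (d : Fin M → W), ∑ e : S × W → X, (∏ z, pX z.1 z.2 (e z)) *
      (∑ j, if decide (j ≠ b s) = σ then F (d (b s)) (e (s, d (b s))) (d j) else 0) =
      ∑ j, if decide (j ≠ b s) = σ then H (d (b s)) (d j) else 0 := by
    intro b d
    rw [sum_pi_one (k := fun (z : S × W) x => pX z.1 z.2 x) (fun z => hX1 _ _) (s, d (b s))
      fun x => ∑ j, if decide (j ≠ b s) = σ then F (d (b s)) x (d j) else 0]
    simp only [Finset.mul_sum]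
    rw [Finset.sum_comm]
    refine Finset.sum_congr rfl fun j _ => ?_
    split_ifs <;> simp [hH]
  have mid : ∀ b : S → Fin M, ∑ d : Fin M → W, (∏ i, pW (d i)) *
      (∑ j, if decide (j ≠ b s) = σ then H (d (b s)) (d j) else 0) =
      ∑ j, if decide (j ≠ b s) = σ then R else 0 := by
    intro b
    simp only [Finset.mul_sum]
    rw [Finset.sum_comm]
    refine Finset.sum_congr rfl fun j _ => ?_
    split_ifs with hb
    · cases σ with
      | false =>
        have hb2 : j = b s := by simpa using hb
        rw [hb2, sum_pi_one (k := fun _ => pW) (fun _ => hW1) (b s) fun w => H w w]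
        simp [hR, ← Finset.sum_mul, hW1]
      | true =>
        have hb2 : b s ≠ j := by simpa using (Ne.symm (by simpa using hb))
        rw [sum_pi_two (k := fun _ => pW) (fun _ => hW1) hb2 H]
        simp [hR]
    · simp
  simp only [inner, mid]
  rw [sum_pi_one (k := fun (_ : S) (_ : Fin M) => (M : ℝ)⁻¹) (fun _ => sum_inv_fin) s
    fun i => ∑ j, if decide (j ≠ i) = σ then R else 0]
  cases σ with
  | false =>
    apply le_of_eq
    simp [hM]
  | true =>
    refine (Finset.sum_le_sum fun i _ => mul_le_mul_of_nonneg_left (Finset.sum_le_sum fun j _ =>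
      (show _ ≤ R by split_ifs <;> simp [hR0])) (by positivity)).trans ?_
    simp [hM]

end RandomCode

/-! ### The one-shot random coding bound -/

section OneShot

/-- A source pair, auxiliary kernels and the channel towards one receiver; the first source is the
one this receiver has to recover. -/
structure Model (S T Q W1 W2 X1 X2 Y : Type*) [Fintype S] [Fintype T] [Fintype Q] [Fintype W1]
    [Fintype W2] [Fintype X1] [Fintype X2] [Fintype Y] where
  pST : S → T → ℝ
  pST_nonneg : ∀ s t, 0 ≤ pST s t
  pST_sum : ∑ s, ∑ t, pST s t = 1
  V : X1 → X2 → Y → ℝ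
  V_nonneg : ∀ x1 x2 y, 0 ≤ V x1 x2 y
  V_sum : ∀ x1 x2, ∑ y, V x1 x2 y = 1
  pQ : Q → ℝ
  pQ_nonneg : ∀ q, 0 ≤ pQ q
  pQ_sum : ∑ q, pQ q = 1
  pW1 : Q → W1 → ℝ
  pW1_nonneg : ∀ q w, 0 ≤ pW1 q w
  pW1_sum : ∀ q, ∑ w, pW1 q w = 1
  pW2 : Q → W2 → ℝ
  pW2_nonneg : ∀ q w, 0 ≤ pW2 q w
  pW2_sum : ∀ q, ∑ w, pW2 q w = 1
  pX1 : S → W1 → Q → X1 → ℝ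
  pX1_nonneg : ∀ s w q x, 0 ≤ pX1 s w q x
  pX1_sum : ∀ s w q, ∑ x, pX1 s w q x = 1
  pX2 : T → W2 → Q → X2 → ℝ
  pX2_nonneg : ∀ t w q x, 0 ≤ pX2 t w q x
  pX2_sum : ∀ t w q, ∑ x, pX2 t w q x = 1

/-- The variables of a `Model`, in the order `q, s, t, y, w1, x1, w2, x2`. -/
abbrev Omega8 (S T Q W1 W2 X1 X2 Y : Type*) := Q × S × T × Y × W1 × X1 × W2 × X2

/-- The variables of a `Model` together with a competitor: in order
`q, s, t, y, s', w1, w1', x1, x1', w2, w2', x2`, where the primed ones are drawn afresh. -/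
abbrev Omega12 (S T Q W1 W2 X1 X2 Y : Type*) :=
  Q × S × T × Y × S × W1 × W1 × X1 × X1 × W2 × W2 × X2

/-- An indicator: `1` if `P` holds and `0` otherwise. -/
noncomputable def ind (P : Prop) : ℝ := by classical exact if P then 1 else 0

lemma ind_nonneg (P : Prop) : 0 ≤ ind P := by unfold ind; split_ifs <;> simp
lemma ind_true {P : Prop} (h : P) : ind P = 1 := by simp [ind, h]
lemma ind_false {P : Prop} (h : ¬P) : ind P = 0 := by simp [ind, h]
lemma ind_le_one (P : Prop) : ind P ≤ 1 := by unfold ind; split_ifs <;> simp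

/-- Threshold decoding: return a word passing the test for some index `j`, if there is one. It errs
only if the correct word fails the test or a wrong word passes it. -/
lemma exists_decoder {S J : Type*} [Fintype S] [Fintype J] [Nonempty S] [DecidableEq S]
    (hit : S → J → Prop) :
    ∃ φ : S, ∀ s j0, ind (φ ≠ s) ≤
      ind (¬hit s j0) + ∑ s2, if s ≠ s2 then ∑ j, ind (hit s2 j) else 0 := by
  by_cases hex : ∃ s j, hit s j
  · obtain ⟨φ, j1, h1⟩ := hex
    refine ⟨φ, fun s j0 => ?_⟩
    have hn : ∀ s2, 0 ≤ if s ≠ s2 then ∑ j, ind (hit s2 j) else 0 := fun s2 => by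
      split_ifs
      · exact Finset.sum_nonneg fun j _ => ind_nonneg _
      · exact le_rfl
    by_cases hs : φ = s
    · rw [ind_false (by simpa using hs)]
      exact add_nonneg (ind_nonneg _) (Finset.sum_nonneg fun s2 _ => hn s2)
    · have h2 := Finset.single_le_sum (fun s2 _ => hn s2) (Finset.mem_univ φ)
      rw [if_pos (Ne.symm hs)] at h2
      have h3 := Finset.single_le_sum (fun j _ => ind_nonneg (hit φ j)) (Finset.mem_univ j1)
      rw [ind_true h1] at h3
      have := ind_le_one (φ ≠ s)
      have := ind_nonneg (¬hit s j0)
      linarith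
  · refine ⟨Classical.arbitrary S, fun s j0 => ?_⟩
    rw [ind_true fun h => hex ⟨s, j0, h⟩]
    have : 0 ≤ ∑ s2, if s ≠ s2 then ∑ j, ind (hit s2 j) else 0 :=
      Finset.sum_nonneg fun s2 _ => by
        split_ifs
        · exact Finset.sum_nonneg fun j _ => ind_nonneg _
        · exact le_rfl
    linarith [ind_le_one (Classical.arbitrary S ≠ s)]

variable {S T Q W1 W2 X1 X2 Y : Type*}
  [Fintype S] [Fintype T] [Fintype Q] [Fintype W1]
  [Fintype W2] [Fintype X1] [Fintype X2] [Fintype Y]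

/-- The joint law of the variables of a model. -/
def Model.joint (m : Model S T Q W1 W2 X1 X2 Y) (ω : Omega8 S T Q W1 W2 X1 X2 Y) : ℝ :=
  match ω with
  | (q, s, t, y, w1, x1, w2, x2) => m.pQ q * m.pST s t * m.V x1 x2 y *
      (m.pW1 q w1 * m.pX1 s w1 q x1) * (m.pW2 q w2 * m.pX2 t w2 q x2)

/-- The weight of the variables of a model with a competitor. The competing word `s'` is counted
without its source probability. Its cloud centre is fresh if `σ1` is true and shared otherwise. -/
def Model.fwt (m : Model S T Q W1 W2 X1 X2 Y) (σ1 : Bool)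
    (z : Omega12 S T Q W1 W2 X1 X2 Y) : ℝ :=
  match z with
  | (q, s, t, y, s2, w1, v1, x1, u1, w2, v2, x2) => m.pQ q * m.pST s t * m.V x1 x2 y *
      (m.pW1 q w1 * m.pW1 q v1 * m.pX1 s w1 q x1 * m.pX1 s2 (cond σ1 v1 w1) q u1) *
      (m.pW2 q w2 * m.pW2 q v2 * m.pX2 t w2 q x2)

/-- The value of a test statistic at the competitor; `σ1` and `σ2` say whether the cloud centres of
the two users are fresh. -/
def fval (σ1 σ2 : Bool) (L : Q → W1 → W2 → S → X1 → Y → ℝ)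
    (z : Omega12 S T Q W1 W2 X1 X2 Y) : ℝ :=
  match z with
  | (q, _, _, y, s2, w1, v1, _, u1, w2, v2, _) =>
    L q (cond σ1 v1 w1) (cond σ2 v2 w2) s2 u1 y

/-- The value of a test statistic at the true variables. -/
def jval (L : Q → W1 → W2 → S → X1 → Y → ℝ) (ω : Omega8 S T Q W1 W2 X1 X2 Y) : ℝ :=
  match ω with
  | (q, s, _, y, w1, x1, w2, _) => L q w1 w2 s x1 y

/-- Total expectation of a test statistic over competitors. -/
def Model.fresh (m : Model S T Q W1 W2 X1 X2 Y) (σ1 σ2 : Bool)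
    (L : Q → W1 → W2 → S → X1 → Y → ℝ) : ℝ :=
  ∑ z, m.fwt σ1 z * fval σ1 σ2 L z

variable [DecidableEq S] [DecidableEq T] [DecidableEq W1] [DecidableEq W2]

/-- The probability of the code of the first user given the time-sharing symbol. -/
noncomputable def Model.wt1 (m : Model S T Q W1 W2 X1 X2 Y) {M : ℕ} (q : Q)
    (c : Code S W1 X1 M) : ℝ := c.wt (m.pW1 q) fun s w x => m.pX1 s w q x

/-- The probability of the code of the second user given the time-sharing symbol. -/
noncomputable def Model.wt2 (m : Model S T Q W1 W2 X1 X2 Y) {M : ℕ} (q : Q)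
    (c : Code T W2 X2 M) : ℝ := c.wt (m.pW2 q) fun s w x => m.pX2 s w q x

omit [DecidableEq S] [DecidableEq T] [DecidableEq W1] [DecidableEq W2] in
lemma Model.wt1_nonneg (m : Model S T Q W1 W2 X1 X2 Y) {M : ℕ} (q : Q)
    (c : Code S W1 X1 M) : 0 ≤ m.wt1 q c :=
  Code.wt_nonneg (m.pW1_nonneg q) (fun _ _ _ => m.pX1_nonneg _ _ _ _) c

omit [DecidableEq S] [DecidableEq T] [DecidableEq W1] [DecidableEq W2] in
lemma Model.wt2_nonneg (m : Model S T Q W1 W2 X1 X2 Y) {M : ℕ} (q : Q)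
    (c : Code T W2 X2 M) : 0 ≤ m.wt2 q c :=
  Code.wt_nonneg (m.pW2_nonneg q) (fun _ _ _ => m.pX2_nonneg _ _ _ _) c

/-- The expectation over the random codes of a function of the transmitted codewords. Each codeword
comes from `Code.cloud_le` with the cloud centre of the word itself. -/
lemma true_term_le (m : Model S T Q W1 W2 X1 X2 Y) {M1 M2 : ℕ} [NeZero M1] [NeZero M2]
    (q : Q) (s : S) (t : T) (F : W1 → X1 → W2 → X2 → ℝ) (hF : ∀ w x v u, 0 ≤ F w x v u) :
    ∑ c : Code S W1 X1 M1, ∑ d : Code T W2 X2 M2, m.wt1 q c * m.wt2 q d *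
      F (c.aux s) (c.enc s) (d.aux t) (d.enc t) ≤
    ∑ w, ∑ x, ∑ v, ∑ u, (m.pW1 q w * m.pX1 s w q x) * (m.pW2 q v * m.pX2 t v q u) * F w x v u := by
  set K : W1 → X1 → ℝ := fun w x =>
    ∑ v, ∑ u, (m.pW2 q v * m.pX2 t v q u) * F w x v u with hK
  have hK0 : ∀ w x, 0 ≤ K w x := fun w x => Finset.sum_nonneg fun v _ => Finset.sum_nonneg fun u _ =>
    mul_nonneg (mul_nonneg (m.pW2_nonneg _ _) (m.pX2_nonneg _ _ _ _)) (hF _ _ _ _)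
  have h2 : ∀ w x, ∑ d : Code T W2 X2 M2, m.wt2 q d * F w x (d.aux t) (d.enc t) ≤ K w x := by
    intro w x
    have h := Code.cloud_le (M := M2) (m.pW2_nonneg q) (m.pW2_sum q)
      (pX := fun s w x => m.pX2 s w q x) (fun t v u => m.pX2_nonneg t v q u)
      (fun t v => m.pX2_sum t v q) t false
      (fun v u _ => F w x v u) (fun _ _ _ => hF _ _ _ _)
    refine (le_of_eq ?_).trans (h.trans (le_of_eq ?_))
    · simp [Model.wt2]
    · simp only [cond_false, one_mul, hK]
      refine Finset.sum_congr rfl fun v _ => ?_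
      rw [Finset.sum_comm]
      refine Finset.sum_congr rfl fun u _ => ?_
      rw [← Finset.sum_mul, ← Finset.sum_mul, ← Finset.mul_sum, m.pW2_sum, mul_one]
  have h1 : ∑ c : Code S W1 X1 M1, m.wt1 q c * K (c.aux s) (c.enc s) ≤
      ∑ w, ∑ x, (m.pW1 q w * m.pX1 s w q x) * K w x := by
    have h := Code.cloud_le (M := M1) (m.pW1_nonneg q) (m.pW1_sum q)
      (pX := fun s w x => m.pX1 s w q x) (fun t v u => m.pX1_nonneg t v q u)
      (fun t v => m.pX1_sum t v q) s false
      (fun v u _ => K v u) (fun _ _ _ => hK0 _ _)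
    refine (le_of_eq ?_).trans (h.trans (le_of_eq ?_))
    · simp [Model.wt1]
    · simp only [cond_false, one_mul]
      refine Finset.sum_congr rfl fun v _ => ?_
      rw [Finset.sum_comm]
      refine Finset.sum_congr rfl fun u _ => ?_
      rw [← Finset.sum_mul, ← Finset.sum_mul, ← Finset.mul_sum, m.pW1_sum, mul_one]
  calc _ = ∑ c : Code S W1 X1 M1, m.wt1 q c * ∑ d : Code T W2 X2 M2, m.wt2 q d *
      F (c.aux s) (c.enc s) (d.aux t) (d.enc t) := by simp only [Finset.mul_sum, mul_assoc]
    _ ≤ ∑ c : Code S W1 X1 M1, m.wt1 q c * K (c.aux s) (c.enc s) :=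
      Finset.sum_le_sum fun c _ => mul_le_mul_of_nonneg_left (h2 _ _) (m.wt1_nonneg q c)
    _ ≤ _ := h1
    _ = _ := by simp only [hK, Finset.mul_sum, mul_assoc]

/-- A bound on the expected number of competitors of each kind per source word: a factor `1 / M1` if
the cell is shared (`σ1 = false`), and a factor `M2` if the index of the other user is wrong
(`σ2 = true`). -/
noncomputable def coef (M1 M2 : ℕ) (σ1 σ2 : Bool) : ℝ := cond σ1 1 (M1 : ℝ)⁻¹ * cond σ2 (M2 : ℝ) 1

/-- The expected contribution of a competing word `s2`, combined with all indices `j` of the other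
user, to a test statistic: `Code.pair_le` for the first user and `Code.cloud_le` for the second. -/
lemma false_term_le (m : Model S T Q W1 W2 X1 X2 Y) {M1 M2 : ℕ} [NeZero M1] [NeZero M2]
    (q : Q) {s s2 : S} (hs : s ≠ s2) (t : T) (y : Y) (σ1 σ2 : Bool)
    (L : W1 → W2 → X1 → ℝ) (hL : ∀ w v u, 0 ≤ L w v u) :
    ∑ c : Code S W1 X1 M1, ∑ d : Code T W2 X2 M2, m.wt1 q c * m.wt2 q d *
      (m.V (c.enc s) (d.enc t) y * ∑ j, if decide (c.bin s2 ≠ c.bin s) = σ1 then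
        (if decide (j ≠ d.bin t) = σ2 then L (c.aux s2) (d.cloud j) (c.enc s2) else 0) else 0) ≤
    coef M1 M2 σ1 σ2 * ∑ w1, ∑ v1, ∑ x1, ∑ u1, ∑ w2, ∑ v2, ∑ x2,
      m.V x1 x2 y * (m.pW1 q w1 * m.pW1 q v1 * m.pX1 s w1 q x1 * m.pX1 s2 (cond σ1 v1 w1) q u1) *
      (m.pW2 q w2 * m.pW2 q v2 * m.pX2 t w2 q x2) * L (cond σ1 v1 w1) (cond σ2 v2 w2) u1 := by
  set K : X1 → W1 → X1 → ℝ := fun x w u => (cond σ2 (M2 : ℝ) 1) *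
    ∑ w2, ∑ v2, ∑ x2, m.pW2 q w2 * m.pW2 q v2 * m.pX2 t w2 q x2 *
      (m.V x x2 y * L w (cond σ2 v2 w2) u) with hK
  have hc2 : 0 ≤ (cond σ2 (M2 : ℝ) 1) := by cases σ2 <;> simp
  have hK0 : ∀ x w u, 0 ≤ K x w u := fun x w u => mul_nonneg hc2 <|
    Finset.sum_nonneg fun w2 _ => Finset.sum_nonneg fun v2 _ => Finset.sum_nonneg fun x2 _ =>
      mul_nonneg (mul_nonneg (mul_nonneg (m.pW2_nonneg _ _) (m.pW2_nonneg _ _))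
        (m.pX2_nonneg _ _ _ _)) (mul_nonneg (m.V_nonneg _ _ _) (hL _ _ _))
  have h2 : ∀ x w u, ∑ d : Code T W2 X2 M2, m.wt2 q d * ∑ j,
      (if decide (j ≠ d.bin t) = σ2 then m.V x (d.enc t) y * L w (d.cloud j) u else 0) ≤ K x w u :=
    fun x w u => Code.cloud_le (M := M2) (m.pW2_nonneg q) (m.pW2_sum q)
      (pX := fun s w x => m.pX2 s w q x) (fun t v u => m.pX2_nonneg t v q u)
      (fun t v => m.pX2_sum t v q) t σ2
      (fun _ x2 v => m.V x x2 y * L w v u) (fun _ _ _ => mul_nonneg (m.V_nonneg _ _ _) (hL _ _ _))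
  have h1 := Code.pair_le (M := M1) (m.pW1_nonneg q) (m.pW1_sum q)
      (pX := fun s w x => m.pX1 s w q x) (fun t v u => m.pX1_nonneg t v q u)
      (fun t v => m.pX1_sum t v q) hs σ1
      (fun _ x w u => K x w u) (fun _ _ _ _ => hK0 _ _ _)
  calc _ = ∑ c : Code S W1 X1 M1, m.wt1 q c * (if decide (c.bin s2 ≠ c.bin s) = σ1 then
        ∑ d : Code T W2 X2 M2, m.wt2 q d * ∑ j, (if decide (j ≠ d.bin t) = σ2 then
          m.V (c.enc s) (d.enc t) y * L (c.aux s2) (d.cloud j) (c.enc s2) else 0) else 0) := by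
        refine Finset.sum_congr rfl fun c _ => ?_
        split_ifs
        · simp only [Finset.mul_sum, mul_ite, mul_zero, mul_assoc]
        · simp
    _ ≤ ∑ c : Code S W1 X1 M1, m.wt1 q c * (if decide (c.bin s2 ≠ c.bin s) = σ1 then
        K (c.enc s) (c.aux s2) (c.enc s2) else 0) := by
        refine Finset.sum_le_sum fun c _ => mul_le_mul_of_nonneg_left ?_ (m.wt1_nonneg q c)
        split_ifs
        · exact h2 _ _ _
        · exact le_rfl
    _ ≤ _ := h1
    _ = _ := by
        simp only [hK, coef, Finset.mul_sum]
        refine Finset.sum_congr rfl fun _ _ => Finset.sum_congr rfl fun _ _ =>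
          Finset.sum_congr rfl fun _ _ => Finset.sum_congr rfl fun _ _ =>
          Finset.sum_congr rfl fun _ _ => Finset.sum_congr rfl fun _ _ =>
          Finset.sum_congr rfl fun _ _ => ?_
        ring

omit [DecidableEq S] [DecidableEq T] [DecidableEq W1] [DecidableEq W2] in
lemma sum_omega12 (F : Omega12 S T Q W1 W2 X1 X2 Y → ℝ) :
    ∑ z, F z = ∑ q, ∑ s, ∑ t, ∑ y, ∑ s2, ∑ w1, ∑ v1, ∑ x1, ∑ u1, ∑ w2, ∑ v2, ∑ x2,
      F (q, s, t, y, s2, w1, v1, x1, u1, w2, v2, x2) := by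
  rw [Fintype.sum_prod_type]
  refine Finset.sum_congr rfl fun _ _ => ?_
  iterate 9
    rw [Fintype.sum_prod_type]
    refine Finset.sum_congr rfl fun _ _ => ?_
  rw [Fintype.sum_prod_type]

lemma sum_swap {A B C D E : Type*} [Fintype A] [Fintype B] [Fintype C] [Fintype D] [Fintype E]
    (f : A → B → C → D → E → ℝ) :
    ∑ a, ∑ b, ∑ c, ∑ d, ∑ e, f a b c d e = ∑ c, ∑ d, ∑ e, ∑ a, ∑ b, f a b c d e := by
  have h := Finset.sum_comm (s := (Finset.univ : Finset (A × B)))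
    (t := (Finset.univ : Finset (C × D × E))) (f := fun x z => f x.1 x.2 z.1 z.2.1 z.2.2)
  simpa only [Fintype.sum_prod_type] using h

/-- One-shot random coding bound for one receiver. The decoder looks for a source word which,
together with some cloud index of the other user, passes the threshold tests `θ σ1 σ2 ≤ L σ1 σ2` for
all four kinds. It errs only if the true variables fail a test or a wrong word passes them all. By
Markov's inequality, a competitor passes the test of its own kind with probability at most
`(θ σ1 σ2)⁻¹` times the expectation of `L σ1 σ2`. -/
theorem oneshot [Nonempty S] (m : Model S T Q W1 W2 X1 X2 Y) {M1 M2 : ℕ} [NeZero M1] [NeZero M2]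
    (L : Bool → Bool → Q → W1 → W2 → S → X1 → Y → ℝ)
    (hL : ∀ σ1 σ2 q w1 w2 s x y, 0 ≤ L σ1 σ2 q w1 w2 s x y)
    (θ : Bool → Bool → ℝ) (hθ : ∀ σ1 σ2, 0 < θ σ1 σ2) :
    ∃ φ : Q → Code S W1 X1 M1 → Code T W2 X2 M2 → Y → S,
      ∑ q, m.pQ q * ∑ c : Code S W1 X1 M1, ∑ d : Code T W2 X2 M2, m.wt1 q c * m.wt2 q d *
        ∑ s, ∑ t, m.pST s t * ∑ y, m.V (c.enc s) (d.enc t) y * ind (φ q c d y ≠ s) ≤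
      ∑ ω, m.joint ω * ind (¬∀ σ1 σ2, θ σ1 σ2 ≤ jval (L σ1 σ2) ω) +
        ∑ σ1, ∑ σ2, (θ σ1 σ2)⁻¹ * coef M1 M2 σ1 σ2 * m.fresh σ1 σ2 (L σ1 σ2) := by
  set good : Q → W1 → W2 → S → X1 → Y → Prop := fun q w1 w2 s x y =>
    ∀ σ1 σ2, θ σ1 σ2 ≤ L σ1 σ2 q w1 w2 s x y with hgood
  have hdec := fun (q : Q) (c : Code S W1 X1 M1) (d : Code T W2 X2 M2) (y : Y) =>
    exists_decoder fun (s : S) (j : Fin M2) => good q (c.aux s) (d.cloud j) s (c.enc s) y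
  choose φ hφ using hdec
  refine ⟨φ, ?_⟩
  -- The contribution of the competitor `s2`, for fixed transmitted words and channel output.
  set N : Bool → Bool → Q → S → T → Y → S → ℝ := fun σ1 σ2 q s t y s2 =>
    ∑ w1, ∑ v1, ∑ x1, ∑ u1, ∑ w2, ∑ v2, ∑ x2,
      m.V x1 x2 y * (m.pW1 q w1 * m.pW1 q v1 * m.pX1 s w1 q x1 * m.pX1 s2 (cond σ1 v1 w1) q u1) *
      (m.pW2 q w2 * m.pW2 q v2 * m.pX2 t w2 q x2) *
      L σ1 σ2 q (cond σ1 v1 w1) (cond σ2 v2 w2) s2 u1 y with hN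
  have hcoef : ∀ σ1 σ2, 0 ≤ coef M1 M2 σ1 σ2 := by
    exact fun σ1 σ2 => mul_nonneg (by cases σ1 <;> simp) (by cases σ2 <;> simp)
  have hN0 : ∀ σ1 σ2 q s t y s2, 0 ≤ N σ1 σ2 q s t y s2 := fun σ1 σ2 q s t y s2 =>
    Finset.sum_nonneg fun _ _ => Finset.sum_nonneg fun _ _ => Finset.sum_nonneg fun _ _ =>
    Finset.sum_nonneg fun _ _ => Finset.sum_nonneg fun _ _ => Finset.sum_nonneg fun _ _ =>
    Finset.sum_nonneg fun _ _ => mul_nonneg (mul_nonneg (mul_nonneg (m.V_nonneg _ _ _)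
      (mul_nonneg (mul_nonneg (mul_nonneg (m.pW1_nonneg _ _) (m.pW1_nonneg _ _))
        (m.pX1_nonneg _ _ _ _)) (m.pX1_nonneg _ _ _ _)))
      (mul_nonneg (mul_nonneg (m.pW2_nonneg _ _) (m.pW2_nonneg _ _)) (m.pX2_nonneg _ _ _ _)))
      (hL _ _ _ _ _ _ _ _)
  set T0 : Q → S → T → Y → ℝ := fun q s t y => ∑ w, ∑ x, ∑ v, ∑ u,
    (m.pW1 q w * m.pX1 s w q x) * (m.pW2 q v * m.pX2 t v q u) *
      (m.V x u y * ind (¬good q w v s x y)) with hT0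
  have main : ∀ q s t y, ∑ c : Code S W1 X1 M1, ∑ d : Code T W2 X2 M2, m.wt1 q c * m.wt2 q d *
      (m.V (c.enc s) (d.enc t) y * ind (φ q c d y ≠ s)) ≤
      T0 q s t y + ∑ s2, ∑ σ1, ∑ σ2, (θ σ1 σ2)⁻¹ * coef M1 M2 σ1 σ2 * N σ1 σ2 q s t y s2 := by
    intro q s t y
    have pt : ∀ (c : Code S W1 X1 M1) (d : Code T W2 X2 M2), ind (φ q c d y ≠ s) ≤
        ind (¬good q (c.aux s) (d.aux t) s (c.enc s) y) + ∑ s2, if s ≠ s2 then ∑ σ1, ∑ σ2,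
          (θ σ1 σ2)⁻¹ * ∑ j, (if decide (c.bin s2 ≠ c.bin s) = σ1 then
            (if decide (j ≠ d.bin t) = σ2 then
              L σ1 σ2 q (c.aux s2) (d.cloud j) s2 (c.enc s2) y else 0) else 0) else 0 := by
      intro c d
      refine (hφ q c d y s (d.bin t)).trans (add_le_add le_rfl (Finset.sum_le_sum fun s2 _ => ?_))
      split_ifs with hs
      swap
      · exact le_rfl
      simp only [Finset.mul_sum]
      rw [Finset.sum_congr rfl fun σ1 _ => Finset.sum_comm, Finset.sum_comm]
      refine Finset.sum_le_sum fun j _ => ?_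
      have hnn : ∀ σ1 σ2, 0 ≤ (θ σ1 σ2)⁻¹ * (if decide (c.bin s2 ≠ c.bin s) = σ1 then
            (if decide (j ≠ d.bin t) = σ2 then
              L σ1 σ2 q (c.aux s2) (d.cloud j) s2 (c.enc s2) y else 0) else 0) := by
        intro σ1 σ2
        refine mul_nonneg (inv_nonneg.mpr (hθ _ _).le) ?_
        split_ifs
        · exact hL _ _ _ _ _ _ _ _
        · exact le_rfl
        · exact le_rfl
      -- Only the test of the competitor's own kind is kept.
      refine le_trans ?_ (Finset.single_le_sum (fun σ1 _ => Finset.sum_nonneg fun σ2 _ => hnn σ1 σ2)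
        (Finset.mem_univ (decide (c.bin s2 ≠ c.bin s))))
      refine le_trans ?_ (Finset.single_le_sum (fun σ2 _ => hnn _ σ2)
        (Finset.mem_univ (decide (j ≠ d.bin t))))
      rw [if_pos rfl, if_pos rfl]
      by_cases hg : good q (c.aux s2) (d.cloud j) s2 (c.enc s2) y
      · rw [ind_true hg, inv_mul_eq_div, one_le_div (hθ _ _)]
        exact hg _ _
      · rw [ind_false hg]
        exact mul_nonneg (inv_nonneg.mpr (hθ _ _).le) (hL _ _ _ _ _ _ _ _)
    calc _ ≤ ∑ c : Code S W1 X1 M1, ∑ d : Code T W2 X2 M2, m.wt1 q c * m.wt2 q d *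
          (m.V (c.enc s) (d.enc t) y * (ind (¬good q (c.aux s) (d.aux t) s (c.enc s) y) +
          ∑ s2, if s ≠ s2 then ∑ σ1, ∑ σ2,
          (θ σ1 σ2)⁻¹ * ∑ j, (if decide (c.bin s2 ≠ c.bin s) = σ1 then
            (if decide (j ≠ d.bin t) = σ2 then
              L σ1 σ2 q (c.aux s2) (d.cloud j) s2 (c.enc s2) y else 0) else 0) else 0)) :=
          Finset.sum_le_sum fun c _ => Finset.sum_le_sum fun d _ =>
            mul_le_mul_of_nonneg_left (mul_le_mul_of_nonneg_left (pt c d) (m.V_nonneg _ _ _))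
              (mul_nonneg (m.wt1_nonneg q c) (m.wt2_nonneg q d))
      _ = ∑ c : Code S W1 X1 M1, ∑ d : Code T W2 X2 M2, m.wt1 q c * m.wt2 q d *
          (m.V (c.enc s) (d.enc t) y * ind (¬good q (c.aux s) (d.aux t) s (c.enc s) y)) +
          ∑ s2, ∑ c : Code S W1 X1 M1, ∑ d : Code T W2 X2 M2, if s ≠ s2 then ∑ σ1, ∑ σ2,
          (θ σ1 σ2)⁻¹ * (m.wt1 q c * m.wt2 q d * (m.V (c.enc s) (d.enc t) y *
            ∑ j, (if decide (c.bin s2 ≠ c.bin s) = σ1 then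
            (if decide (j ≠ d.bin t) = σ2 then
              L σ1 σ2 q (c.aux s2) (d.cloud j) s2 (c.enc s2) y else 0) else 0))) else 0 := by
          simp only [mul_add, Finset.sum_add_distrib]
          congr 1
          symm
          rw [Finset.sum_comm]
          refine Finset.sum_congr rfl fun c _ => ?_
          rw [Finset.sum_comm]
          refine Finset.sum_congr rfl fun d _ => ?_
          rw [Finset.mul_sum, Finset.mul_sum]
          refine Finset.sum_congr rfl fun s2 _ => ?_
          split_ifs
          · rw [Finset.mul_sum, Finset.mul_sum]
            refine Finset.sum_congr rfl fun σ1 _ => ?_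
            rw [Finset.mul_sum, Finset.mul_sum]
            refine Finset.sum_congr rfl fun σ2 _ => ?_
            ring
          · simp
      _ ≤ _ := by
          refine add_le_add (true_term_le m q s t (fun w x v u =>
            m.V x u y * ind (¬good q w v s x y)) fun _ _ _ _ =>
              mul_nonneg (m.V_nonneg _ _ _) (ind_nonneg _)) (Finset.sum_le_sum fun s2 _ => ?_)
          split_ifs with hs
          · rw [Finset.sum_congr rfl fun c _ => Finset.sum_comm, Finset.sum_comm]
            refine Finset.sum_le_sum fun σ1 _ => ?_
            rw [Finset.sum_congr rfl fun c _ => Finset.sum_comm, Finset.sum_comm]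
            refine Finset.sum_le_sum fun σ2 _ => ?_
            simp only [← Finset.mul_sum]
            rw [mul_assoc]
            exact mul_le_mul_of_nonneg_left (false_term_le m q hs t y σ1 σ2
              (fun w v u => L σ1 σ2 q w v s2 u y) fun _ _ _ => hL _ _ _ _ _ _ _ _)
              (inv_nonneg.mpr (hθ _ _).le)
          · simp only [Finset.sum_const_zero]
            exact Finset.sum_nonneg fun σ1 _ => Finset.sum_nonneg fun σ2 _ =>
              mul_nonneg (mul_nonneg (inv_nonneg.mpr (hθ _ _).le) (hcoef _ _)) (hN0 _ _ _ _ _ _ _)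
  have swap : ∀ q, ∑ c : Code S W1 X1 M1, ∑ d : Code T W2 X2 M2, m.wt1 q c * m.wt2 q d *
        ∑ s, ∑ t, m.pST s t * ∑ y, m.V (c.enc s) (d.enc t) y * ind (φ q c d y ≠ s) =
      ∑ s, ∑ t, m.pST s t * ∑ y, ∑ c : Code S W1 X1 M1, ∑ d : Code T W2 X2 M2,
        m.wt1 q c * m.wt2 q d * (m.V (c.enc s) (d.enc t) y * ind (φ q c d y ≠ s)) := by
    intro q
    refine Eq.trans ?_ ((sum_swap fun (c : Code S W1 X1 M1) (d : Code T W2 X2 M2) s t y =>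
      m.pST s t * (m.wt1 q c * m.wt2 q d *
        (m.V (c.enc s) (d.enc t) y * ind (φ q c d y ≠ s)))).trans ?_)
    · simp only [Finset.mul_sum]
      refine Finset.sum_congr rfl fun _ _ => Finset.sum_congr rfl fun _ _ =>
        Finset.sum_congr rfl fun _ _ => Finset.sum_congr rfl fun _ _ =>
        Finset.sum_congr rfl fun _ _ => ?_
      ring
    · simp only [Finset.mul_sum]
  simp only [swap]
  refine (Finset.sum_le_sum fun q _ => mul_le_mul_of_nonneg_left
    (Finset.sum_le_sum fun s _ => Finset.sum_le_sum fun t _ => mul_le_mul_of_nonneg_left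
      (Finset.sum_le_sum fun y _ => main q s t y) (m.pST_nonneg s t)) (m.pQ_nonneg q)).trans
        (le_of_eq ?_)
  have eT : ∑ ω, m.joint ω * ind (¬∀ σ1 σ2, θ σ1 σ2 ≤ jval (L σ1 σ2) ω) =
      ∑ q, m.pQ q * ∑ s, ∑ t, m.pST s t * ∑ y, T0 q s t y := by
    simp only [Fintype.sum_prod_type, Model.joint, jval, hT0, hgood, Finset.mul_sum]
    refine Finset.sum_congr rfl fun _ _ => Finset.sum_congr rfl fun _ _ =>
      Finset.sum_congr rfl fun _ _ => Finset.sum_congr rfl fun _ _ =>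
      Finset.sum_congr rfl fun _ _ => Finset.sum_congr rfl fun _ _ =>
      Finset.sum_congr rfl fun _ _ => Finset.sum_congr rfl fun _ _ => ?_
    ring
  have eN : ∀ σ1 σ2, m.fresh σ1 σ2 (L σ1 σ2) =
      ∑ q, m.pQ q * ∑ s, ∑ t, m.pST s t * ∑ y, ∑ s2, N σ1 σ2 q s t y s2 := by
    intro σ1 σ2
    rw [Model.fresh, sum_omega12]
    refine Finset.sum_congr rfl fun q _ => ?_
    rw [Finset.mul_sum]
    refine Finset.sum_congr rfl fun s _ => ?_
    rw [Finset.mul_sum]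
    iterate 2
      refine Finset.sum_congr rfl fun _ _ => ?_
      rw [Finset.mul_sum, Finset.mul_sum]
    refine Finset.sum_congr rfl fun _ _ => ?_
    dsimp only [N]
    iterate 6
      rw [Finset.mul_sum, Finset.mul_sum]
      refine Finset.sum_congr rfl fun _ _ => ?_
    rw [Finset.mul_sum, Finset.mul_sum]
    refine Finset.sum_congr rfl fun _ _ => ?_
    dsimp only [Model.fwt, fval]
    ring
  -- The expectation over `q, s, t`, with the output `y` summed, as a linear functional.
  set Λ : (Q → S → T → Y → ℝ) → ℝ := fun g =>
    ∑ q, m.pQ q * ∑ s, ∑ t, m.pST s t * ∑ y, g q s t y with hΛ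
  have hadd : ∀ g h, Λ (fun q s t y => g q s t y + h q s t y) = Λ g + Λ h := fun g h => by
    simp only [hΛ, Finset.sum_add_distrib, mul_add]
  have hmul : ∀ (k : ℝ) g, Λ (fun q s t y => k * g q s t y) = k * Λ g := fun k g => by
    simp only [hΛ, Finset.mul_sum]
    refine Finset.sum_congr rfl fun _ _ => Finset.sum_congr rfl fun _ _ =>
      Finset.sum_congr rfl fun _ _ => Finset.sum_congr rfl fun _ _ => ?_
    ring
  have e1 : ∀ q s t y, ∑ s2, ∑ σ1, ∑ σ2, (θ σ1 σ2)⁻¹ * coef M1 M2 σ1 σ2 * N σ1 σ2 q s t y s2 =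
      ∑ σ1, ∑ σ2, (θ σ1 σ2)⁻¹ * coef M1 M2 σ1 σ2 * ∑ s2, N σ1 σ2 q s t y s2 := by
    intro q s t y
    simp only [Fintype.sum_bool, Finset.sum_add_distrib, ← Finset.mul_sum]
  rw [eT]
  simp only [eN, e1]
  change Λ (fun q s t y => T0 q s t y + _) = Λ T0 + ∑ σ1, ∑ σ2, _ * Λ _
  rw [hadd]
  simp only [Fintype.sum_bool, hadd, hmul]

end OneShot

/-! ### Memoryless extensions -/

section Power

variable {S T Q W1 W2 X1 X2 Y : Type*}
  [Fintype S] [Fintype T] [Fintype Q] [Fintype W1]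
  [Fintype W2] [Fintype X1] [Fintype X2] [Fintype Y]

lemma sum_pi_kernel {ι A B : Type*} [Fintype ι] [DecidableEq ι] [Fintype A]
    {k : B → A → ℝ} (hk : ∀ b, ∑ a, k b a = 1) (b : ι → B) :
    ∑ a : ι → A, ∏ i, k (b i) (a i) = 1 := by
  rw [sum_pi_prod fun i a => k (b i) a]
  simp [hk]

/-- The `n`-letter memoryless extension of a model. -/
def Model.pow (m : Model S T Q W1 W2 X1 X2 Y) (n : ℕ) :
    Model (Fin n → S) (Fin n → T) (Fin n → Q) (Fin n → W1) (Fin n → W2) (Fin n → X1)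
      (Fin n → X2) (Fin n → Y) where
  pST s t := ∏ i, m.pST (s i) (t i)
  pST_nonneg _ _ := Finset.prod_nonneg fun _ _ => m.pST_nonneg _ _
  pST_sum := by
    have h : ∀ s : Fin n → S, ∑ t : Fin n → T, ∏ i, m.pST (s i) (t i) =
        ∏ i, ∑ t, m.pST (s i) t := fun s => sum_pi_prod fun i t => m.pST (s i) t
    simp only [h]
    rw [sum_pi_prod fun _ s => ∑ t, m.pST s t]
    simp [m.pST_sum]
  V x1 x2 y := ∏ i, m.V (x1 i) (x2 i) (y i)
  V_nonneg _ _ _ := Finset.prod_nonneg fun _ _ => m.V_nonneg _ _ _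
  V_sum x1 x2 := sum_pi_kernel (k := fun (b : X1 × X2) y => m.V b.1 b.2 y)
    (fun b => m.V_sum b.1 b.2) fun i => (x1 i, x2 i)
  pQ q := ∏ i, m.pQ (q i)
  pQ_nonneg _ := Finset.prod_nonneg fun _ _ => m.pQ_nonneg _
  pQ_sum := sum_pi_kernel (k := fun (_ : Unit) q => m.pQ q) (fun _ => m.pQ_sum) fun _ => ()
  pW1 q w := ∏ i, m.pW1 (q i) (w i)
  pW1_nonneg _ _ := Finset.prod_nonneg fun _ _ => m.pW1_nonneg _ _
  pW1_sum q := sum_pi_kernel (k := m.pW1) m.pW1_sum q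
  pW2 q w := ∏ i, m.pW2 (q i) (w i)
  pW2_nonneg _ _ := Finset.prod_nonneg fun _ _ => m.pW2_nonneg _ _
  pW2_sum q := sum_pi_kernel (k := m.pW2) m.pW2_sum q
  pX1 s w q x := ∏ i, m.pX1 (s i) (w i) (q i) (x i)
  pX1_nonneg _ _ _ _ := Finset.prod_nonneg fun _ _ => m.pX1_nonneg _ _ _ _
  pX1_sum s w q := sum_pi_kernel (k := fun (b : S × W1 × Q) x => m.pX1 b.1 b.2.1 b.2.2 x)
    (fun b => m.pX1_sum b.1 b.2.1 b.2.2) fun i => (s i, w i, q i)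
  pX2 t w q x := ∏ i, m.pX2 (t i) (w i) (q i) (x i)
  pX2_nonneg _ _ _ _ := Finset.prod_nonneg fun _ _ => m.pX2_nonneg _ _ _ _
  pX2_sum t w q := sum_pi_kernel (k := fun (b : T × W2 × Q) x => m.pX2 b.1 b.2.1 b.2.2 x)
    (fun b => m.pX2_sum b.1 b.2.1 b.2.2) fun i => (t i, w i, q i)

/-- The memoryless extension of a test statistic. -/
def powStat (n : ℕ) (L : Q → W1 → W2 → S → X1 → Y → ℝ) (q : Fin n → Q) (w1 : Fin n → W1)
    (w2 : Fin n → W2) (s : Fin n → S) (x : Fin n → X1) (y : Fin n → Y) : ℝ :=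
  ∏ i, L (q i) (w1 i) (w2 i) (s i) (x i) (y i)

/-- Tuples of sequences as sequences of tuples. -/
def equiv8 (n : ℕ) : Omega8 (Fin n → S) (Fin n → T) (Fin n → Q) (Fin n → W1) (Fin n → W2)
    (Fin n → X1) (Fin n → X2) (Fin n → Y) ≃ (Fin n → Omega8 S T Q W1 W2 X1 X2 Y) where
  toFun z i := (z.1 i, z.2.1 i, z.2.2.1 i, z.2.2.2.1 i, z.2.2.2.2.1 i, z.2.2.2.2.2.1 i,
    z.2.2.2.2.2.2.1 i, z.2.2.2.2.2.2.2 i)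
  invFun e := (fun i => (e i).1, fun i => (e i).2.1, fun i => (e i).2.2.1, fun i => (e i).2.2.2.1,
    fun i => (e i).2.2.2.2.1, fun i => (e i).2.2.2.2.2.1, fun i => (e i).2.2.2.2.2.2.1,
    fun i => (e i).2.2.2.2.2.2.2)
  left_inv _ := rfl
  right_inv _ := rfl

/-- Tuples of sequences as sequences of tuples, with a competitor. -/
def equiv12 (n : ℕ) : Omega12 (Fin n → S) (Fin n → T) (Fin n → Q) (Fin n → W1) (Fin n → W2)
    (Fin n → X1) (Fin n → X2) (Fin n → Y) ≃ (Fin n → Omega12 S T Q W1 W2 X1 X2 Y) where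
  toFun z i := (z.1 i, z.2.1 i, z.2.2.1 i, z.2.2.2.1 i, z.2.2.2.2.1 i, z.2.2.2.2.2.1 i,
    z.2.2.2.2.2.2.1 i, z.2.2.2.2.2.2.2.1 i, z.2.2.2.2.2.2.2.2.1 i, z.2.2.2.2.2.2.2.2.2.1 i,
    z.2.2.2.2.2.2.2.2.2.2.1 i, z.2.2.2.2.2.2.2.2.2.2.2 i)
  invFun e := (fun i => (e i).1, fun i => (e i).2.1, fun i => (e i).2.2.1, fun i => (e i).2.2.2.1,
    fun i => (e i).2.2.2.2.1, fun i => (e i).2.2.2.2.2.1, fun i => (e i).2.2.2.2.2.2.1,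
    fun i => (e i).2.2.2.2.2.2.2.1, fun i => (e i).2.2.2.2.2.2.2.2.1,
    fun i => (e i).2.2.2.2.2.2.2.2.2.1, fun i => (e i).2.2.2.2.2.2.2.2.2.2.1,
    fun i => (e i).2.2.2.2.2.2.2.2.2.2.2)
  left_inv _ := rfl
  right_inv _ := rfl

lemma Model.joint_pow (m : Model S T Q W1 W2 X1 X2 Y) (n : ℕ)
    (z : Omega8 (Fin n → S) (Fin n → T) (Fin n → Q) (Fin n → W1) (Fin n → W2)
      (Fin n → X1) (Fin n → X2) (Fin n → Y)) :
    (m.pow n).joint z = ∏ i, m.joint (equiv8 n z i) := by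
  obtain ⟨q, s, t, y, w1, x1, w2, x2⟩ := z
  simp only [Model.joint, Model.pow, equiv8, Equiv.coe_fn_mk, Finset.prod_mul_distrib]

omit [Fintype S] [Fintype T] [Fintype Q] [Fintype W1] [Fintype W2] [Fintype X1] [Fintype X2]
  [Fintype Y] in
lemma jval_pow (n : ℕ) (L : Q → W1 → W2 → S → X1 → Y → ℝ)
    (z : Omega8 (Fin n → S) (Fin n → T) (Fin n → Q) (Fin n → W1) (Fin n → W2)
      (Fin n → X1) (Fin n → X2) (Fin n → Y)) :
    jval (powStat n L) z = ∏ i, jval L (equiv8 n z i) := rfl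

lemma cond_apply_fin {A : Type*} {n : ℕ} (σ : Bool) (v w : Fin n → A) (i : Fin n) :
    (cond σ v w) i = cond σ (v i) (w i) := by cases σ <;> rfl

lemma Model.fresh_pow (m : Model S T Q W1 W2 X1 X2 Y) (n : ℕ) (σ1 σ2 : Bool)
    (L : Q → W1 → W2 → S → X1 → Y → ℝ) :
    (m.pow n).fresh σ1 σ2 (powStat n L) = m.fresh σ1 σ2 L ^ n := by
  have h := sum_pi_prod (ι := Fin n) fun _ z => m.fwt σ1 z * fval σ1 σ2 L z
  rw [Finset.prod_const, Finset.card_univ, Fintype.card_fin] at h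
  rw [Model.fresh, Model.fresh, ← h]
  refine Fintype.sum_equiv (equiv12 n) _ _ fun z => ?_
  obtain ⟨q, s, t, y, s2, w1, v1, x1, u1, w2, v2, x2⟩ := z
  simp only [Model.fwt, fval, powStat, Model.pow, equiv12, Equiv.coe_fn_mk,
    Finset.prod_mul_distrib, cond_apply_fin]

end Power

/-! ### Likelihood-ratio tests -/

section Tests

/-- Enlarging the first argument increases conditional mutual information. -/
lemma cmi_mono {Ω α β γ δ α' : Type*} [Fintype Ω] [Fintype α] [Fintype β] [Fintype γ] [Fintype δ]
    [Fintype α'] [DecidableEq α] [DecidableEq β] [DecidableEq γ] [DecidableEq δ] [DecidableEq α']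
    {p : Ω → ℝ} (hp : ∀ ω, 0 ≤ p ω) (f : Ω → α) (g : Ω → β) (h : Ω → γ) (w : Ω → δ) (f' : Ω → α')
    (e : α × δ → α') (he : Function.Injective e) (hf : ∀ ω, f' ω = e (f ω, w ω)) :
    cmi p f g h ≤ cmi p f' g h := by
  have h0 := cmi_nonneg hp w g fun ω => (f ω, h ω)
  obtain rfl : f' = fun ω => e (f ω, w ω) := funext hf
  have e1 : margEnt p (fun ω => (e (f ω, w ω), h ω)) = margEnt p (fun ω => (w ω, f ω, h ω)) :=
    margEnt_injective p (fun ω => (w ω, f ω, h ω))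
      (fun z : δ × α × γ => (e (z.2.1, z.1), z.2.2)) (by
        rintro ⟨a, b, c⟩ ⟨a', b', c'⟩ hh
        simp only [Prod.mk.injEq, he.eq_iff] at hh ⊢
        tauto)
  have e2 : margEnt p (fun ω => (e (f ω, w ω), g ω, h ω)) =
      margEnt p (fun ω => (w ω, g ω, f ω, h ω)) :=
    margEnt_injective p (fun ω => (w ω, g ω, f ω, h ω))
      (fun z : δ × β × α × γ => (e (z.2.2.1, z.1), z.2.1, z.2.2.2)) (by
        rintro ⟨a, b, c, d⟩ ⟨a', b', c', d'⟩ hh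
        simp only [Prod.mk.injEq, he.eq_iff] at hh ⊢
        tauto)
  have e3 : margEnt p (fun ω => (g ω, f ω, h ω)) = margEnt p (fun ω => (f ω, g ω, h ω)) :=
    margEnt_injective p (fun ω => (f ω, g ω, h ω))
      (fun z : α × β × γ => (z.2.1, z.1, z.2.2)) (by
        rintro ⟨a, b, c⟩ ⟨a', b', c'⟩ hh
        simp only [Prod.mk.injEq] at hh ⊢
        tauto)
  simp only [cmi] at h0 ⊢
  rw [e1, e2]
  rw [e3] at h0
  linarith

variable {S T Q W1 W2 X1 X2 Y : Type*}
  [Fintype S] [Fintype T] [Fintype Q] [Fintype W1]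
  [Fintype W2] [Fintype X1] [Fintype X2] [Fintype Y]

lemma Model.joint_nonneg (m : Model S T Q W1 W2 X1 X2 Y) (ω) : 0 ≤ m.joint ω := by
  obtain ⟨q, s, t, y, w1, x1, w2, x2⟩ := ω
  exact mul_nonneg (mul_nonneg (mul_nonneg (mul_nonneg (m.pQ_nonneg _) (m.pST_nonneg _ _))
    (m.V_nonneg _ _ _)) (mul_nonneg (m.pW1_nonneg _ _) (m.pX1_nonneg _ _ _ _)))
    (mul_nonneg (m.pW2_nonneg _ _) (m.pX2_nonneg _ _ _ _))

/-- The law of the source word to be recovered. -/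
def Model.pS (m : Model S T Q W1 W2 X1 X2 Y) (s : S) : ℝ := ∑ t, m.pST s t

lemma Model.pS_nonneg (m : Model S T Q W1 W2 X1 X2 Y) (s : S) : 0 ≤ m.pS s :=
  Finset.sum_nonneg fun _ _ => m.pST_nonneg _ _

lemma Model.pS_sum (m : Model S T Q W1 W2 X1 X2 Y) : ∑ s, m.pS s = 1 := m.pST_sum

/-- The variables on which the decoding tests depend, apart from the channel output:
`q, s, w1, x1, w2`. -/
def core8 (ω : Omega8 S T Q W1 W2 X1 X2 Y) : Q × S × W1 × X1 × W2 :=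
  (ω.1, ω.2.1, ω.2.2.2.2.1, ω.2.2.2.2.2.1, ω.2.2.2.2.2.2.1)

/-- The channel output. -/
def out8 (ω : Omega8 S T Q W1 W2 X1 X2 Y) : Y := ω.2.2.2.1

/-- The law of `core8`. -/
def Model.coreLaw (m : Model S T Q W1 W2 X1 X2 Y) (c : Q × S × W1 × X1 × W2) : ℝ :=
  m.pQ c.1 * m.pS c.2.1 * (m.pW1 c.1 c.2.2.1 * m.pX1 c.2.1 c.2.2.1 c.1 c.2.2.2.1) *
    m.pW2 c.1 c.2.2.2.2

/-- Reordering of the variables which puts `core8` in front. -/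
def coreEquiv : Omega8 S T Q W1 W2 X1 X2 Y ≃ (Q × S × W1 × X1 × W2) × T × X2 × Y where
  toFun z := (core8 z, z.2.2.1, z.2.2.2.2.2.2.2, z.2.2.2.1)
  invFun z := (z.1.1, z.1.2.1, z.2.1, z.2.2.2, z.1.2.2.1, z.1.2.2.2.1, z.1.2.2.2.2, z.2.2.1)
  left_inv _ := rfl
  right_inv _ := rfl

/-- The transmitted word of the other user, its channel input and the channel output integrate out. -/
lemma Model.sum_core (m : Model S T Q W1 W2 X1 X2 Y) (G : Q × S × W1 × X1 × W2 → ℝ) :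
    ∑ ω, m.joint ω * G (core8 ω) = ∑ c, m.coreLaw c * G c := by
  rw [Fintype.sum_equiv coreEquiv (fun ω => m.joint ω * G (core8 ω))
    (fun z => m.joint (coreEquiv.symm z) * G z.1) fun z => rfl, Fintype.sum_prod_type]
  refine Finset.sum_congr rfl fun c _ => ?_
  dsimp only
  rw [← Finset.sum_mul]
  congr 1
  obtain ⟨q, s, w1, x1, w2⟩ := c
  have e : ∀ t, ∑ z : X2 × Y, m.joint (coreEquiv.symm ((q, s, w1, x1, w2), t, z)) =
      m.pQ q * m.pST s t * (m.pW1 q w1 * m.pX1 s w1 q x1) * m.pW2 q w2 := by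
    intro t
    have e2 : ∀ x2 y, m.joint (coreEquiv.symm ((q, s, w1, x1, w2), t, x2, y)) =
        m.pQ q * m.pST s t * (m.pW1 q w1 * m.pX1 s w1 q x1) * m.pW2 q w2 *
          (m.pX2 t w2 q x2 * m.V x1 x2 y) := by
      intro x2 y
      change m.pQ q * m.pST s t * m.V x1 x2 y * (m.pW1 q w1 * m.pX1 s w1 q x1) *
        (m.pW2 q w2 * m.pX2 t w2 q x2) = _
      ring
    simp only [Fintype.sum_prod_type, e2, ← Finset.mul_sum, m.V_sum, mul_one, m.pX2_sum]
  rw [Fintype.sum_prod_type]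
  simp only [e, Model.coreLaw, Model.pS, Finset.mul_sum, Finset.sum_mul]

lemma Model.joint_sum (m : Model S T Q W1 W2 X1 X2 Y) : ∑ ω, m.joint ω = 1 := by
  have h := m.sum_core fun _ => 1
  simp only [mul_one] at h
  rw [h]
  simp only [Fintype.sum_prod_type, Model.coreLaw, ← Finset.mul_sum, ← Finset.sum_mul,
    m.pW2_sum, m.pX1_sum, mul_one, m.pW1_sum, m.pS_sum, m.pQ_sum]

/-- Reordering which splits off the fresh variables `s', w1', x1', w2'`. -/
def freshEquiv : Omega12 S T Q W1 W2 X1 X2 Y ≃ Omega8 S T Q W1 W2 X1 X2 Y × S × W1 × X1 × W2 where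
  toFun
    | (q, s, t, y, s2, w1, v1, x1, u1, w2, v2, x2) =>
      ((q, s, t, y, w1, x1, w2, x2), s2, v1, u1, v2)
  invFun
    | ((q, s, t, y, w1, x1, w2, x2), s2, v1, u1, v2) =>
      (q, s, t, y, s2, w1, v1, x1, u1, w2, v2, x2)
  left_inv _ := rfl
  right_inv _ := rfl

/-- The competitors as fresh draws conditionally on the true variables. -/
lemma Model.fresh_eq (m : Model S T Q W1 W2 X1 X2 Y) (σ1 σ2 : Bool)
    (L : Q → W1 → W2 → S → X1 → Y → ℝ) :
    m.fresh σ1 σ2 L = ∑ ω, m.joint ω * ∑ s2, ∑ v1, ∑ u1, ∑ v2,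
      m.pW1 ω.1 v1 * m.pX1 s2 (cond σ1 v1 ω.2.2.2.2.1) ω.1 u1 * m.pW2 ω.1 v2 *
      L ω.1 (cond σ1 v1 ω.2.2.2.2.1) (cond σ2 v2 ω.2.2.2.2.2.2.1) s2 u1 ω.2.2.2.1 := by
  rw [Model.fresh, Fintype.sum_equiv freshEquiv _
    (fun z => m.fwt σ1 (freshEquiv.symm z) * fval σ1 σ2 L (freshEquiv.symm z))
    fun z => by rw [Equiv.symm_apply_apply], Fintype.sum_prod_type]
  refine Finset.sum_congr rfl fun ω _ => ?_
  obtain ⟨q, s, t, y, w1, x1, w2, x2⟩ := ω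
  simp only [Fintype.sum_prod_type, Finset.mul_sum]
  refine Finset.sum_congr rfl fun _ _ => Finset.sum_congr rfl fun _ _ =>
    Finset.sum_congr rfl fun _ _ => Finset.sum_congr rfl fun _ _ => ?_
  simp only [freshEquiv, Equiv.coe_fn_symm_mk, Model.fwt, fval, Model.joint]
  ring

lemma Model.pm_core (m : Model S T Q W1 W2 X1 X2 Y) {α : Type*} [DecidableEq α]
    (e : Q × S × W1 × X1 × W2 → α) (a : α) :
    pm m.joint (fun ω => e (core8 ω)) a = ∑ c, m.coreLaw c * if e c = a then 1 else 0 := by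
  rw [← m.sum_core fun c => if e c = a then 1 else 0]
  simp only [pm, mul_ite, mul_one, mul_zero]

variable [DecidableEq S] [DecidableEq T] [DecidableEq Q] [DecidableEq W1] [DecidableEq W2]
  [DecidableEq X1] [DecidableEq X2] [DecidableEq Y]

omit [DecidableEq T] [DecidableEq X2] [DecidableEq Y] in
lemma Model.pm_core_inj (m : Model S T Q W1 W2 X1 X2 Y) {α : Type*} [DecidableEq α]
    (e : Q × S × W1 × X1 × W2 → α) (he : Function.Injective e) (c : Q × S × W1 × X1 × W2) :
    pm m.joint (fun ω => e (core8 ω)) (e c) = m.coreLaw c := by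
  rw [m.pm_core]
  simp [he.eq_iff]

lemma Model.pm_S (m : Model S T Q W1 W2 X1 X2 Y) (s : S) :
    pm m.joint (fun ω => (core8 ω).2.1) s = m.pS s := by
  rw [m.pm_core fun c => c.2.1]
  simp [Fintype.sum_prod_type, Model.coreLaw, mul_assoc, ← Finset.mul_sum, ← Finset.sum_mul,
    m.pQ_sum, m.pX1_sum, m.pW1_sum, m.pW2_sum]

/-- The likelihood-ratio test for the variables `ff` given `hh`. When `ff` and `hh` together
determine all of `q, s, w1, x1, w2`, and `κ` is the law of `ff` given `hh` and the source word,
a wrong word drawn afresh passes it rarely. -/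
lemma Model.exists_test_of (m : Model S T Q W1 W2 X1 X2 Y) (σ1 σ2 : Bool) {α γ : Type*}
    [Fintype α] [Fintype γ] [DecidableEq α] [DecidableEq γ]
    (E : Q × S × W1 × X1 × W2 ≃ α × γ) (sα : α → S) (κ : γ → α → ℝ)
    (hs : ∀ c, sα (E c).1 = c.2.1)
    (hκ : ∀ c, m.coreLaw c = (∑ c', m.coreLaw c' * if (E c').2 = (E c).2 then 1 else 0) *
      (m.pS c.2.1 * κ (E c).2 (E c).1))
    (hfresh : ∀ q s w1 x1 w2 (R : α → γ → ℝ), ∑ s2, ∑ v1, ∑ u1, ∑ v2,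
      m.pW1 q v1 * m.pX1 s2 (cond σ1 v1 w1) q u1 * m.pW2 q v2 *
        R (E (q, s2, cond σ1 v1 w1, u1, cond σ2 v2 w2)).1
          (E (q, s2, cond σ1 v1 w1, u1, cond σ2 v2 w2)).2 =
      ∑ a, κ (E (q, s, w1, x1, w2)).2 a * R a (E (q, s, w1, x1, w2)).2) :
    ∃ L : Q → W1 → W2 → S → X1 → Y → ℝ, (∀ q w1 w2 s x y, 0 ≤ L q w1 w2 s x y) ∧
      m.fresh σ1 σ2 L ≤ 1 ∧ (∀ ω, 0 < m.joint ω → 0 < jval L ω) ∧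
      ∑ ω, m.joint ω * Real.logb 2 (jval L ω) =
        cmi m.joint (fun ω => (E (core8 ω)).1) out8 (fun ω => (E (core8 ω)).2) -
          margEnt m.joint fun ω => (core8 ω).2.1 := by
  have hp := m.joint_nonneg
  set f : Omega8 S T Q W1 W2 X1 X2 Y → α := fun ω => (E (core8 ω)).1 with hf
  set h : Omega8 S T Q W1 W2 X1 X2 Y → γ := fun ω => (E (core8 ω)).2 with hh
  set σ : α → ℝ := fun a => m.pS (sα a) with hσ
  refine ⟨fun q w1 w2 s x y => ratio m.joint f out8 h σ (E (q, s, w1, x, w2)).1 y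
    (E (q, s, w1, x, w2)).2, fun _ _ _ _ _ _ => ratio_nonneg hp _ _ _ (fun _ => m.pS_nonneg _) _ _ _,
    ?_, ?_, ?_⟩
  · refine le_trans (le_of_eq ?_) (expect_ratio_le hp m.joint_sum f out8 h σ κ ?_)
    · rw [m.fresh_eq]
      refine Finset.sum_congr rfl fun ω _ => ?_
      rw [hfresh ω.1 ω.2.1 ω.2.2.2.2.1 ω.2.2.2.2.2.1 ω.2.2.2.2.2.2.1
        fun a c => ratio m.joint f out8 h σ a ω.2.2.2.1 c]
      rfl
    · intro a c
      obtain ⟨z, hz⟩ := E.surjective (a, c)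
      have e1 : pm m.joint (fun ω => (f ω, h ω)) (a, c) = m.coreLaw z := by
        rw [← hz]
        exact m.pm_core_inj E E.injective z
      have e2 : pm m.joint h c = ∑ c', m.coreLaw c' * if (E c').2 = c then 1 else 0 :=
        m.pm_core (fun z => (E z).2) c
      have := hκ z
      rw [e1, e2, this, hσ, hz, ← hs z, hz]
  · intro ω hω
    refine ratio_pos hp f out8 h hω (hω.trans_le ?_)
    rw [hσ]
    dsimp only
    rw [hf, hs, ← m.pm_S]
    exact le_pm hp (fun ω => (core8 ω).2.1) ω
  · exact expect_log_ratio hp f out8 h σ (fun ω => (core8 ω).2.1) fun ω => by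
      rw [m.pm_S, hσ]
      dsimp only
      rw [hf, hs]

/-- The mutual information which governs the competitors of each kind. The variables which are
fresh for the competitor go in the first argument, the shared ones into the condition. -/
noncomputable def Model.info (m : Model S T Q W1 W2 X1 X2 Y) : Bool → Bool → ℝ
  | false, false => cmi m.joint (fun ω => (ω.2.1, ω.2.2.2.2.2.1)) out8
      (fun ω => (ω.1, ω.2.2.2.2.1, ω.2.2.2.2.2.2.1))
  | true, false => cmi m.joint (fun ω => (ω.2.1, ω.2.2.2.2.1, ω.2.2.2.2.2.1)) out8
      (fun ω => (ω.1, ω.2.2.2.2.2.2.1))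
  | false, true => cmi m.joint (fun ω => (ω.2.1, ω.2.2.2.2.2.1, ω.2.2.2.2.2.2.1)) out8
      (fun ω => (ω.1, ω.2.2.2.2.1))
  | true, true => cmi m.joint (fun ω => (ω.2.1, ω.2.2.2.2.1, ω.2.2.2.2.2.1, ω.2.2.2.2.2.2.1)) out8
      (fun ω => ω.1)

/-- The entropy of the source word to be recovered. -/
noncomputable def Model.entS (m : Model S T Q W1 W2 X1 X2 Y) : ℝ :=
  margEnt m.joint fun ω => ω.2.1

/-- The four likelihood-ratio tests: a competitor of the given kind has total expectation at most
one, while the true variables have expected logarithm `m.info σ1 σ2 - m.entS`. -/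
lemma Model.exists_test (m : Model S T Q W1 W2 X1 X2 Y) (σ1 σ2 : Bool) :
    ∃ L : Q → W1 → W2 → S → X1 → Y → ℝ, (∀ q w1 w2 s x y, 0 ≤ L q w1 w2 s x y) ∧
      m.fresh σ1 σ2 L ≤ 1 ∧ (∀ ω, 0 < m.joint ω → 0 < jval L ω) ∧
      ∑ ω, m.joint ω * Real.logb 2 (jval L ω) = m.info σ1 σ2 - m.entS := by
  match σ1, σ2 with
  | false, false =>
    refine m.exists_test_of false false (α := S × X1) (γ := Q × W1 × W2)
      { toFun := fun c => ((c.2.1, c.2.2.2.1), c.1, c.2.2.1, c.2.2.2.2)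
        invFun := fun z => (z.2.1, z.1.1, z.2.2.1, z.1.2, z.2.2.2)
        left_inv := fun _ => rfl
        right_inv := fun _ => rfl } (fun a => a.1) (fun c a => m.pX1 a.1 c.2.1 c.1 a.2)
      (fun _ => rfl) ?_ ?_
    · rintro ⟨q, s, w1, x1, w2⟩
      simp [Fintype.sum_prod_type, Model.coreLaw, ite_and, mul_assoc, ← Finset.mul_sum,
        ← Finset.sum_mul, m.pX1_sum, m.pS_sum, m.pW1_sum, m.pW2_sum,
        -mul_eq_mul_left_iff]
      ring
    · intro q s w1 x1 w2 R
      simp [Fintype.sum_prod_type, mul_assoc, ← Finset.mul_sum,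
        ← Finset.sum_mul, m.pW1_sum, m.pW2_sum]
  | true, false =>
    refine m.exists_test_of true false (α := S × W1 × X1) (γ := Q × W2)
      { toFun := fun c => ((c.2.1, c.2.2.1, c.2.2.2.1), c.1, c.2.2.2.2)
        invFun := fun z => (z.2.1, z.1.1, z.1.2.1, z.1.2.2, z.2.2)
        left_inv := fun _ => rfl
        right_inv := fun _ => rfl } (fun a => a.1)
      (fun c a => m.pW1 c.1 a.2.1 * m.pX1 a.1 a.2.1 c.1 a.2.2) (fun _ => rfl) ?_ ?_
    · rintro ⟨q, s, w1, x1, w2⟩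
      simp [Fintype.sum_prod_type, Model.coreLaw, ite_and, mul_assoc, ← Finset.mul_sum,
        ← Finset.sum_mul, m.pX1_sum, m.pS_sum, m.pW1_sum, m.pW2_sum,
        -mul_eq_mul_left_iff]
      ring
    · intro q s w1 x1 w2 R
      simp [Fintype.sum_prod_type, mul_assoc, ← Finset.mul_sum,
        ← Finset.sum_mul, m.pW1_sum, m.pW2_sum]
  | false, true =>
    refine m.exists_test_of false true (α := S × X1 × W2) (γ := Q × W1)
      { toFun := fun c => ((c.2.1, c.2.2.2.1, c.2.2.2.2), c.1, c.2.2.1)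
        invFun := fun z => (z.2.1, z.1.1, z.2.2, z.1.2.1, z.1.2.2)
        left_inv := fun _ => rfl
        right_inv := fun _ => rfl } (fun a => a.1)
      (fun c a => m.pX1 a.1 c.2 c.1 a.2.1 * m.pW2 c.1 a.2.2) (fun _ => rfl) ?_ ?_
    · rintro ⟨q, s, w1, x1, w2⟩
      simp [Fintype.sum_prod_type, Model.coreLaw, ite_and, mul_assoc, ← Finset.mul_sum,
        ← Finset.sum_mul, m.pX1_sum, m.pS_sum, m.pW1_sum, m.pW2_sum,
        -mul_eq_mul_left_iff]
      ring
    · intro q s w1 x1 w2 R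
      simp [Fintype.sum_prod_type, mul_assoc, ← Finset.mul_sum,
        ← Finset.sum_mul, m.pW1_sum, m.pW2_sum]
  | true, true =>
    refine m.exists_test_of true true (α := S × W1 × X1 × W2) (γ := Q)
      { toFun := fun c => ((c.2.1, c.2.2.1, c.2.2.2.1, c.2.2.2.2), c.1)
        invFun := fun z => (z.2, z.1.1, z.1.2.1, z.1.2.2.1, z.1.2.2.2)
        left_inv := fun _ => rfl
        right_inv := fun _ => rfl } (fun a => a.1)
      (fun c a => m.pW1 c a.2.1 * m.pX1 a.1 a.2.1 c a.2.2.1 * m.pW2 c a.2.2.2) (fun _ => rfl) ?_ ?_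
    · rintro ⟨q, s, w1, x1, w2⟩
      simp [Fintype.sum_prod_type, Model.coreLaw, ite_and, mul_assoc, ← Finset.mul_sum,
        ← Finset.sum_mul, m.pX1_sum, m.pS_sum, m.pW1_sum, m.pW2_sum,
        -mul_eq_mul_left_iff]
    · intro q s w1 x1 w2 R
      simp [Fintype.sum_prod_type, mul_assoc, ← Finset.mul_sum,
        ← Finset.sum_mul, m.pW1_sum, m.pW2_sum]

end Tests

/-! ### Reliable decoding at one receiver -/

section Decoder

/-- The number of cells at rate `r`. -/
noncomputable def cells (r : ℝ) (n : ℕ) : ℕ := ⌈(2 : ℝ) ^ (n * r)⌉₊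

instance (r : ℝ) (n : ℕ) : NeZero (cells r n) :=
  ⟨(Nat.ceil_pos.mpr (Real.rpow_pos_of_pos two_pos _)).ne'⟩

lemma le_cells (r : ℝ) (n : ℕ) : (2 : ℝ) ^ (n * r) ≤ cells r n := Nat.le_ceil _

lemma cells_le {r : ℝ} (hr : 0 ≤ r) (n : ℕ) : (cells r n : ℝ) ≤ 2 * (2 : ℝ) ^ (n * r) := by
  have h1 : (1 : ℝ) ≤ (2 : ℝ) ^ (n * r) := Real.one_le_rpow one_le_two (by positivity)
  have h2 := (Nat.ceil_lt_add_one (le_trans zero_le_one h1)).le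
  rw [cells]
  linarith

lemma coef_cells_le {r1 r2 : ℝ} (hr2 : 0 ≤ r2) (n : ℕ) (σ1 σ2 : Bool) :
    coef (cells r1 n) (cells r2 n) σ1 σ2 ≤
      2 * (2 : ℝ) ^ (n * (cond σ1 0 (-r1) + cond σ2 r2 0)) := by
  have ha : cond σ1 1 ((cells r1 n : ℝ))⁻¹ ≤ (2 : ℝ) ^ (n * cond σ1 0 (-r1)) := by
    cases σ1 with
    | false =>
      simp only [cond_false, mul_neg]
      rw [Real.rpow_neg two_pos.le]
      exact inv_anti₀ (Real.rpow_pos_of_pos two_pos _) (le_cells r1 n)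
    | true => simp
  have hb : cond σ2 (cells r2 n : ℝ) 1 ≤ 2 * (2 : ℝ) ^ (n * cond σ2 r2 0) := by
    cases σ2 with
    | false => simp
    | true => exact cells_le hr2 n
  have hb0 : 0 ≤ cond σ2 (cells r2 n : ℝ) 1 := by cases σ2 <;> simp
  rw [coef, mul_add, Real.rpow_add two_pos]
  calc _ ≤ (2 : ℝ) ^ (n * cond σ1 0 (-r1)) * (2 * (2 : ℝ) ^ (n * cond σ2 r2 0)) :=
        mul_le_mul ha hb hb0 (Real.rpow_pos_of_pos two_pos _).le
    _ = _ := by ring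

variable {S T Q W1 W2 X1 X2 Y : Type*}
  [Fintype S] [Fintype T] [Fintype Q] [Fintype W1]
  [Fintype W2] [Fintype X1] [Fintype X2] [Fintype Y]

/-- The true variables pass the `n`-letter test with probability tending to one. -/
lemma Model.fail_le (m : Model S T Q W1 W2 X1 X2 Y) (L : Q → W1 → W2 → S → X1 → Y → ℝ)
    (hL : ∀ ω, 0 < m.joint ω → 0 < jval L ω) {δ : ℝ} (hδ : 0 < δ) :
    ∃ C : ℝ, ∀ n : ℕ, 0 < n → ∑ z, (m.pow n).joint z *
      ind (¬(2 : ℝ) ^ (n * (∑ ω, m.joint ω * Real.logb 2 (jval L ω) - δ)) ≤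
        jval (powStat n L) z) ≤ C / n := by
  obtain ⟨C, hC⟩ := chebyshev_lower m.joint_nonneg m.joint_sum
    (fun ω => Real.logb 2 (jval L ω)) hδ
  refine ⟨C, fun n hn => le_trans ?_ (hC n hn)⟩
  rw [Fintype.sum_equiv (equiv8 n) _ (fun e => (∏ i, m.joint (e i)) *
    ind (¬(2 : ℝ) ^ (n * (∑ ω, m.joint ω * Real.logb 2 (jval L ω) - δ)) ≤ ∏ i, jval L (e i)))
    fun z => by rw [m.joint_pow, jval_pow]]
  refine Finset.sum_le_sum fun e _ => ?_
  by_cases h0 : ∀ i, 0 < m.joint (e i)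
  · refine mul_le_mul_of_nonneg_left ?_ (Finset.prod_nonneg fun i _ => m.joint_nonneg _)
    by_cases h : (2 : ℝ) ^ (n * (∑ ω, m.joint ω * Real.logb 2 (jval L ω) - δ)) ≤
        ∏ i, jval L (e i)
    · rw [ind_false (not_not.mpr h)]
      split_ifs <;> simp
    · rw [ind_true h, if_pos]
      have hpos : 0 < ∏ i, jval L (e i) := Finset.prod_pos fun i _ => hL _ (h0 i)
      rw [not_le, ← Real.logb_lt_iff_lt_rpow one_lt_two hpos,
        Real.logb_prod _ _ fun i _ => (hL _ (h0 i)).ne'] at h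
      exact h
  · push Not at h0
    obtain ⟨i, hi⟩ := h0
    rw [Finset.prod_eq_zero (Finset.mem_univ i) (le_antisymm hi (m.joint_nonneg _))]
    simp

variable [DecidableEq S] [DecidableEq T] [DecidableEq Q] [DecidableEq W1] [DecidableEq W2]
  [DecidableEq X1] [DecidableEq X2] [DecidableEq Y]

/-- The probability of error of a decoder in the random code ensemble. The decoder knows the codes
and the time-sharing sequence. -/
noncomputable def Model.avgErr (m : Model S T Q W1 W2 X1 X2 Y) {M1 M2 : ℕ}
    (φ : Q → Code S W1 X1 M1 → Code T W2 X2 M2 → Y → S) : ℝ :=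
  ∑ q, m.pQ q * ∑ c : Code S W1 X1 M1, ∑ d : Code T W2 X2 M2, m.wt1 q c * m.wt2 q d *
    ∑ s, ∑ t, m.pST s t * ∑ y, m.V (c.enc s) (d.enc t) y * ind (φ q c d y ≠ s)

/-- Reliable decoding at one receiver: the rates have to lie below the information of every kind
of competitor. -/
theorem Model.decoder (m : Model S T Q W1 W2 X1 X2 Y) {r1 r2 : ℝ} (hr2 : 0 ≤ r2)
    (hr : ∀ σ1 σ2, cond σ1 0 (-r1) + cond σ2 r2 0 < m.info σ1 σ2 - m.entS)
    {ε : ℝ} (hε : 0 < ε) :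
    ∃ N : ℕ, ∀ n : ℕ, N ≤ n → ∃ φ : (Fin n → Q) →
      Code (Fin n → S) (Fin n → W1) (Fin n → X1) (cells r1 n) →
      Code (Fin n → T) (Fin n → W2) (Fin n → X2) (cells r2 n) → (Fin n → Y) → (Fin n → S),
      (m.pow n).avgErr φ ≤ ε := by
  have hS : Nonempty S := by
    by_contra h
    rw [not_nonempty_iff] at h
    simpa using m.pS_sum
  choose L hL0 hLf hLp hLe using m.exists_test
  set μ : Bool → Bool → ℝ := fun σ1 σ2 => m.info σ1 σ2 - m.entS with hμ
  set ρ : Bool → Bool → ℝ := fun σ1 σ2 => cond σ1 0 (-r1) + cond σ2 r2 0 with hρ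
  -- The threshold exponent lies halfway between the rate and the information.
  set δ : Bool → Bool → ℝ := fun σ1 σ2 => (μ σ1 σ2 - ρ σ1 σ2) / 2 with hδ
  have hδ0 : ∀ σ1 σ2, 0 < δ σ1 σ2 := fun σ1 σ2 => half_pos (sub_pos.mpr (hr σ1 σ2))
  choose C hC using fun σ1 σ2 => m.fail_le (L σ1 σ2) (hLp σ1 σ2) (hδ0 σ1 σ2)
  set b : ℕ → ℝ := fun n => (∑ σ1, ∑ σ2, C σ1 σ2 / n) +
    ∑ σ1, ∑ σ2, 2 * ((2 : ℝ) ^ (-δ σ1 σ2)) ^ n with hb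
  have hlim : Filter.Tendsto b Filter.atTop (nhds 0) := by
    have h1 : Filter.Tendsto (fun n : ℕ => ∑ σ1, ∑ σ2, C σ1 σ2 / (n : ℝ)) Filter.atTop
        (nhds (∑ _σ1 : Bool, ∑ _σ2 : Bool, 0)) :=
      tendsto_finsetSum _ fun σ1 _ => tendsto_finsetSum _ fun σ2 _ =>
        tendsto_const_div_atTop_nhds_zero_nat _
    have h2 : Filter.Tendsto (fun n : ℕ => ∑ σ1, ∑ σ2, 2 * ((2 : ℝ) ^ (-δ σ1 σ2)) ^ n)
        Filter.atTop (nhds (∑ _σ1 : Bool, ∑ _σ2 : Bool, 2 * 0)) :=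
      tendsto_finsetSum _ fun σ1 _ => tendsto_finsetSum _ fun σ2 _ =>
        (tendsto_pow_atTop_nhds_zero_of_lt_one (Real.rpow_pos_of_pos two_pos _).le
          (Real.rpow_lt_one_of_one_lt_of_neg one_lt_two (neg_lt_zero.mpr (hδ0 σ1 σ2)))).const_mul 2
    have h3 := h1.add h2
    simp only [Finset.sum_const_zero, mul_zero, add_zero] at h3
    exact h3
  obtain ⟨N, hN⟩ := Filter.eventually_atTop.mp (hlim.eventually (gt_mem_nhds hε))
  refine ⟨max N 1, fun n hn => ?_⟩
  have hn0 : 0 < n := lt_of_lt_of_le one_pos ((le_max_right _ _).trans hn)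
  set θ : Bool → Bool → ℝ := fun σ1 σ2 => (2 : ℝ) ^ (n * (μ σ1 σ2 - δ σ1 σ2)) with hθ
  have hθ0 : ∀ σ1 σ2, 0 < θ σ1 σ2 := fun σ1 σ2 => Real.rpow_pos_of_pos two_pos _
  obtain ⟨φ, hφ⟩ := oneshot (m.pow n) (M1 := cells r1 n) (M2 := cells r2 n)
    (fun σ1 σ2 => powStat n (L σ1 σ2))
    (fun σ1 σ2 _ _ _ _ _ _ => Finset.prod_nonneg fun i _ => hL0 σ1 σ2 _ _ _ _ _ _) θ hθ0
  refine ⟨φ, hφ.trans (le_trans ?_ (hN n ((le_max_left _ _).trans hn)).le)⟩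
  refine add_le_add ?_ (Finset.sum_le_sum fun σ1 _ => Finset.sum_le_sum fun σ2 _ => ?_)
  · have hpt : ∀ z, (m.pow n).joint z *
        ind (¬∀ σ1 σ2, θ σ1 σ2 ≤ jval (powStat n (L σ1 σ2)) z) ≤
        ∑ σ1, ∑ σ2, (m.pow n).joint z * ind (¬θ σ1 σ2 ≤ jval (powStat n (L σ1 σ2)) z) := by
      intro z
      have hnn : ∀ σ1 σ2, 0 ≤ (m.pow n).joint z *
          ind (¬θ σ1 σ2 ≤ jval (powStat n (L σ1 σ2)) z) := fun σ1 σ2 =>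
        mul_nonneg ((m.pow n).joint_nonneg z) (ind_nonneg _)
      by_cases h : ∀ σ1 σ2, θ σ1 σ2 ≤ jval (powStat n (L σ1 σ2)) z
      · rw [ind_false (not_not.mpr h), mul_zero]
        exact Finset.sum_nonneg fun σ1 _ => Finset.sum_nonneg fun σ2 _ => hnn σ1 σ2
      · rw [ind_true h]
        push Not at h
        obtain ⟨σ1, σ2, h⟩ := h
        refine le_trans ?_ (Finset.single_le_sum (fun σ1 _ => Finset.sum_nonneg fun σ2 _ =>
          hnn σ1 σ2) (Finset.mem_univ σ1))
        refine le_trans ?_ (Finset.single_le_sum (fun σ2 _ => hnn σ1 σ2) (Finset.mem_univ σ2))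
        rw [ind_true (not_le.mpr h)]
    refine (Finset.sum_le_sum fun z _ => hpt z).trans ?_
    rw [Finset.sum_comm]
    refine Finset.sum_le_sum fun σ1 _ => ?_
    rw [Finset.sum_comm]
    refine Finset.sum_le_sum fun σ2 _ => ?_
    have := hC σ1 σ2 n hn0
    rw [hLe] at this
    exact this
  · rw [m.fresh_pow]
    have hf0 : 0 ≤ m.fresh σ1 σ2 (L σ1 σ2) := by
      rw [m.fresh_eq]
      exact Finset.sum_nonneg fun ω _ => mul_nonneg (m.joint_nonneg ω) <|
        Finset.sum_nonneg fun _ _ => Finset.sum_nonneg fun _ _ => Finset.sum_nonneg fun _ _ =>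
          Finset.sum_nonneg fun _ _ => mul_nonneg (mul_nonneg (mul_nonneg (m.pW1_nonneg _ _)
            (m.pX1_nonneg _ _ _ _)) (m.pW2_nonneg _ _)) (hL0 _ _ _ _ _ _ _ _)
    have hc0 : 0 ≤ coef (cells r1 n) (cells r2 n) σ1 σ2 :=
      mul_nonneg (by cases σ1 <;> simp) (by cases σ2 <;> simp)
    have hc := coef_cells_le (r1 := r1) hr2 n σ1 σ2
    calc _ ≤ (θ σ1 σ2)⁻¹ * coef (cells r1 n) (cells r2 n) σ1 σ2 * 1 :=
          mul_le_mul_of_nonneg_left (pow_le_one₀ hf0 (hLf σ1 σ2))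
            (mul_nonneg (inv_nonneg.mpr (hθ0 _ _).le) hc0)
      _ ≤ (θ σ1 σ2)⁻¹ * (2 * (2 : ℝ) ^ (n * ρ σ1 σ2)) := by
          rw [mul_one]
          exact mul_le_mul_of_nonneg_left hc (inv_nonneg.mpr (hθ0 _ _).le)
      _ = _ := by
          rw [hθ, ← Real.rpow_natCast, ← Real.rpow_mul two_pos.le]
          dsimp only
          rw [← Real.rpow_neg two_pos.le, mul_left_comm, ← Real.rpow_add two_pos]
          congr 2
          simp only [hδ]
          ring

end Decoder

/-! ### Two receivers -/

section TwoReceivers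

variable {S T Q W1 W2 X1 X2 Y Y1 Y2 : Type*}
  [Fintype S] [Fintype T] [Fintype Q] [Fintype W1]
  [Fintype W2] [Fintype X1] [Fintype X2] [Fintype Y] [Fintype Y1] [Fintype Y2]

/-- The model seen by the first receiver, which observes only the first channel output. -/
def Model.fst (m : Model S T Q W1 W2 X1 X2 (Y1 × Y2)) : Model S T Q W1 W2 X1 X2 Y1 :=
  { m with
    V := fun x1 x2 y1 => ∑ y2, m.V x1 x2 (y1, y2)
    V_nonneg := fun _ _ _ => Finset.sum_nonneg fun _ _ => m.V_nonneg _ _ _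
    V_sum := fun x1 x2 => by rw [← m.V_sum x1 x2, Fintype.sum_prod_type] }

/-- The model with the two users and the two channel outputs interchanged. -/
def Model.swap (m : Model S T Q W1 W2 X1 X2 (Y1 × Y2)) : Model T S Q W2 W1 X2 X1 (Y2 × Y1) where
  pST t s := m.pST s t
  pST_nonneg t s := m.pST_nonneg s t
  pST_sum := by rw [Finset.sum_comm, m.pST_sum]
  V x2 x1 y := m.V x1 x2 (y.2, y.1)
  V_nonneg _ _ _ := m.V_nonneg _ _ _
  V_sum x2 x1 := by
    rw [← m.V_sum x1 x2, Fintype.sum_prod_type, Fintype.sum_prod_type, Finset.sum_comm]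
  pQ := m.pQ
  pQ_nonneg := m.pQ_nonneg
  pQ_sum := m.pQ_sum
  pW1 := m.pW2
  pW1_nonneg := m.pW2_nonneg
  pW1_sum := m.pW2_sum
  pW2 := m.pW1
  pW2_nonneg := m.pW1_nonneg
  pW2_sum := m.pW1_sum
  pX1 := m.pX2
  pX1_nonneg := m.pX2_nonneg
  pX1_sum := m.pX2_sum
  pX2 := m.pX1
  pX2_nonneg := m.pX1_nonneg
  pX2_sum := m.pX1_sum

lemma pm_equiv {Ω α β : Type*} [Fintype Ω] [Fintype α] [Fintype β] [DecidableEq α]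
    (p : Ω → ℝ) (e : Ω ≃ α × β) (a : α) :
    pm p (fun ω => (e ω).1) a = ∑ b, p (e.symm (a, b)) := by
  rw [pm, Fintype.sum_equiv e _ (fun z => if z.1 = a then p (e.symm z) else 0) fun ω => by simp,
    Fintype.sum_prod_type, Finset.sum_comm]
  simp

omit [Fintype Y1] in
lemma sum_seq {n : ℕ} (k : Fin n → Y1 → Y2 → ℝ) (y1 : Fin n → Y1) :
    ∑ y2 : Fin n → Y2, ∏ i, k i (y1 i) (y2 i) = ∏ i, ∑ y2, k i (y1 i) y2 :=
  sum_pi_prod fun i y2 => k i (y1 i) y2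

/-- The error probability at the first receiver depends on the channel through the marginal channel
to that receiver. -/
lemma icPe1_eq [DecidableEq S] (m : Model S T Q W1 W2 X1 X2 (Y1 × Y2)) {n : ℕ}
    (f1 : (Fin n → S) → Fin n → X1) (f2 : (Fin n → T) → Fin n → X2)
    (φ : (Fin n → Y1) → Fin n → S) :
    icPe1 m.pST (fun x1 x2 y1 y2 => m.V x1 x2 (y1, y2)) n f1 f2 φ =
      ∑ s, ∑ t, (m.fst.pow n).pST s t *
        ∑ y, (m.fst.pow n).V (f1 s) (f2 t) y * ind (φ y ≠ s) := by
  refine Finset.sum_congr rfl fun s _ => Finset.sum_congr rfl fun t _ => ?_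
  rw [Finset.mul_sum]
  refine Finset.sum_congr rfl fun y1 _ => ?_
  by_cases h : φ y1 ≠ s
  · simp only [if_pos h, ind_true h, mul_one, ← Finset.mul_sum]
    rw [sum_seq fun i a b => m.V (f1 s i) (f2 t i) (a, b)]
    rfl
  · simp only [if_neg h, ind_false h, mul_zero, Finset.sum_const_zero]

/-- The error probability at the second receiver is that of the first receiver after interchanging
the users. -/
lemma icPe2_eq [DecidableEq T] (m : Model S T Q W1 W2 X1 X2 (Y1 × Y2)) {n : ℕ}
    (f1 : (Fin n → S) → Fin n → X1) (f2 : (Fin n → T) → Fin n → X2)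
    (φ : (Fin n → Y2) → Fin n → T) :
    icPe2 m.pST (fun x1 x2 y1 y2 => m.V x1 x2 (y1, y2)) n f1 f2 φ =
      ∑ t, ∑ s, (m.swap.fst.pow n).pST t s *
        ∑ y, (m.swap.fst.pow n).V (f2 t) (f1 s) y * ind (φ y ≠ t) := by
  rw [Finset.sum_comm]
  refine Finset.sum_congr rfl fun s _ => Finset.sum_congr rfl fun t _ => ?_
  rw [Finset.mul_sum, Finset.sum_comm]
  refine Finset.sum_congr rfl fun y2 _ => ?_
  by_cases h : φ y2 ≠ t
  · simp only [if_pos h, ind_true h, mul_one, ← Finset.mul_sum]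
    rw [sum_seq fun i b a => m.V (f1 s i) (f2 t i) (a, b)]
    rfl
  · simp only [if_neg h, ind_false h, mul_zero, Finset.sum_const_zero]

lemma icPe1_nonneg [DecidableEq S] (m : Model S T Q W1 W2 X1 X2 (Y1 × Y2)) {n : ℕ}
    (f1 : (Fin n → S) → Fin n → X1) (f2 : (Fin n → T) → Fin n → X2)
    (φ : (Fin n → Y1) → Fin n → S) :
    0 ≤ icPe1 m.pST (fun x1 x2 y1 y2 => m.V x1 x2 (y1, y2)) n f1 f2 φ := by
  rw [icPe1_eq]
  exact Finset.sum_nonneg fun s _ => Finset.sum_nonneg fun t _ =>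
    mul_nonneg (Model.pST_nonneg _ _ _) <| Finset.sum_nonneg fun y _ =>
      mul_nonneg (Model.V_nonneg _ _ _ _) (ind_nonneg _)

lemma icPe2_nonneg [DecidableEq T] (m : Model S T Q W1 W2 X1 X2 (Y1 × Y2)) {n : ℕ}
    (f1 : (Fin n → S) → Fin n → X1) (f2 : (Fin n → T) → Fin n → X2)
    (φ : (Fin n → Y2) → Fin n → T) :
    0 ≤ icPe2 m.pST (fun x1 x2 y1 y2 => m.V x1 x2 (y1, y2)) n f1 f2 φ := by
  rw [icPe2_eq]
  exact Finset.sum_nonneg fun s _ => Finset.sum_nonneg fun t _ =>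
    mul_nonneg (Model.pST_nonneg _ _ _) <| Finset.sum_nonneg fun y _ =>
      mul_nonneg (Model.V_nonneg _ _ _ _) (ind_nonneg _)

variable [DecidableEq S] [DecidableEq T] [DecidableEq Q] [DecidableEq W1] [DecidableEq W2]
  [DecidableEq X1] [DecidableEq X2] [DecidableEq Y1] [DecidableEq Y2]

/-- A random variable is at most its mean for some outcome. -/
lemma exists_le_of_sum_le {α : Type*} [Fintype α] {w F : α → ℝ} {ε : ℝ} (hw : ∀ a, 0 ≤ w a)
    (hw1 : ∑ a, w a = 1) (h : ∑ a, w a * F a ≤ ε) : ∃ a, F a ≤ ε := by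
  by_contra! hc
  have h1 : ∀ a, w a * ε ≤ w a * F a := fun a => mul_le_mul_of_nonneg_left (hc a).le (hw a)
  have h2 : ∑ a, w a * ε = ε := by rw [← Finset.sum_mul, hw1, one_mul]
  have h3 : ∀ a ∈ Finset.univ, w a * ε = w a * F a :=
    (Finset.sum_eq_sum_iff_of_le fun a _ => h1 a).mp
      (le_antisymm (Finset.sum_le_sum fun a _ => h1 a) (h.trans h2.ge))
  have h4 : ∀ a, w a = 0 := fun a => by
    have := h3 a (Finset.mem_univ a)
    by_contra h0
    exact (hc a).ne (mul_left_cancel₀ h0 this)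
  simp [h4] at hw1

omit [DecidableEq Q] [DecidableEq X1] [DecidableEq X2] in
/-- The probabilistic method: some pair of codes is at most as bad as the average. -/
lemma Model.exists_code (m : Model S T Q W1 W2 X1 X2 Y) {M1 M2 : ℕ} [NeZero M1] [NeZero M2]
    (F : Q → Code S W1 X1 M1 → Code T W2 X2 M2 → ℝ) {ε : ℝ}
    (h : ∑ q, m.pQ q * ∑ c, ∑ d, m.wt1 q c * m.wt2 q d * F q c d ≤ ε) :
    ∃ q c d, F q c d ≤ ε := by
  let w : Q × Code S W1 X1 M1 × Code T W2 X2 M2 → ℝ := fun z =>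
    m.pQ z.1 * (m.wt1 z.1 z.2.1 * m.wt2 z.1 z.2.2)
  have hw : ∀ z, 0 ≤ w z := fun z => mul_nonneg (m.pQ_nonneg _)
    (mul_nonneg (m.wt1_nonneg _ _) (m.wt2_nonneg _ _))
  have hw1 : ∑ z, w z = 1 := by
    rw [← m.pQ_sum, Fintype.sum_prod_type]
    refine Finset.sum_congr rfl fun q _ => ?_
    simp only [w]
    rw [← Finset.mul_sum, Fintype.sum_prod_type]
    dsimp only
    rw [← Finset.sum_mul_sum]
    have e1 : ∑ c : Code S W1 X1 M1, m.wt1 q c = 1 :=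
      Code.sum_wt (m.pW1_sum q) fun s w => m.pX1_sum s w q
    have e2 : ∑ d : Code T W2 X2 M2, m.wt2 q d = 1 :=
      Code.sum_wt (m.pW2_sum q) fun s w => m.pX2_sum s w q
    rw [e1, e2, mul_one, mul_one]
  obtain ⟨⟨q, c, d⟩, hF⟩ := exists_le_of_sum_le (F := fun z => F z.1 z.2.1 z.2.2) hw hw1 <| by
    refine le_trans (le_of_eq ?_) h
    rw [Fintype.sum_prod_type]
    refine Finset.sum_congr rfl fun q _ => ?_
    rw [Fintype.sum_prod_type, Finset.mul_sum]
    refine Finset.sum_congr rfl fun c _ => ?_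
    rw [Finset.mul_sum]
    refine Finset.sum_congr rfl fun d _ => ?_
    simp only [w]
    ring
  exact ⟨q, c, d, hF⟩

/-- Rates which satisfy the decoding conditions at both receivers make the source admissible: the
random code is good on average at both receivers, so some code is good. -/
theorem Model.admissible (m : Model S T Q W1 W2 X1 X2 (Y1 × Y2)) {r1 r2 : ℝ} (hr1 : 0 ≤ r1)
    (hr2 : 0 ≤ r2)
    (h1 : ∀ σ1 σ2, cond σ1 0 (-r1) + cond σ2 r2 0 < m.fst.info σ1 σ2 - m.fst.entS)
    (h2 : ∀ σ1 σ2, cond σ1 0 (-r2) + cond σ2 r1 0 < m.swap.fst.info σ1 σ2 - m.swap.fst.entS) :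
    ICAdmissible m.pST fun x1 x2 y1 y2 => m.V x1 x2 (y1, y2) := by
  intro ε hε _
  obtain ⟨N1, hN1⟩ := m.fst.decoder hr2 h1 (half_pos hε)
  obtain ⟨N2, hN2⟩ := m.swap.fst.decoder hr1 h2 (half_pos hε)
  refine ⟨max N1 N2, fun n hn => ?_⟩
  obtain ⟨φ1, hφ1⟩ := hN1 n ((le_max_left _ _).trans hn)
  obtain ⟨φ2, hφ2⟩ := hN2 n ((le_max_right _ _).trans hn)
  obtain ⟨q, c, d, h⟩ := (m.fst.pow n).exists_code (M1 := cells r1 n) (M2 := cells r2 n)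
    (fun q c d => icPe1 m.pST (fun x1 x2 y1 y2 => m.V x1 x2 (y1, y2)) n c.enc d.enc (φ1 q c d) +
      icPe2 m.pST (fun x1 x2 y1 y2 => m.V x1 x2 (y1, y2)) n c.enc d.enc (φ2 q d c)) (ε := ε) <| by
    simp only [mul_add, Finset.sum_add_distrib]
    rw [← add_halves ε]
    refine add_le_add (le_trans (le_of_eq ?_) hφ1) (le_trans (le_of_eq ?_) hφ2)
    · simp only [icPe1_eq, Model.avgErr]
    · rw [Model.avgErr]
      refine Finset.sum_congr rfl fun q _ => ?_
      rw [Finset.sum_comm]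
      refine congrArg ((m.fst.pow n).pQ q * ·) ?_
      refine Finset.sum_congr rfl fun d _ => Finset.sum_congr rfl fun c _ => ?_
      rw [icPe2_eq, mul_comm ((m.fst.pow n).wt1 q c)]
      rfl
  exact ⟨c.enc, d.enc, φ1 q c d, φ2 q d c, max_le
    ((le_add_of_nonneg_right (icPe2_nonneg m _ _ _)).trans h)
    ((le_add_of_nonneg_left (icPe1_nonneg m _ _ _)).trans h)⟩

end TwoReceivers

/-! ### Elimination of the rates -/

section Rates

variable {S T Q W1 W2 X1 X2 Y : Type*}
  [Fintype S] [Fintype T] [Fintype Q] [Fintype W1]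
  [Fintype W2] [Fintype X1] [Fintype X2] [Fintype Y]
  [DecidableEq S] [DecidableEq T] [DecidableEq Q] [DecidableEq W1] [DecidableEq W2]
  [DecidableEq X1] [DecidableEq X2] [DecidableEq Y]

omit [DecidableEq T] [DecidableEq X2] in
/-- By the chain rule, a competitor for which the second cloud centre is wrong as well is governed
by a larger mutual information. -/
lemma Model.info_le_info (m : Model S T Q W1 W2 X1 X2 Y) (σ : Bool) :
    m.info σ false ≤ m.info σ true := by
  cases σ with
  | false =>
    exact cmi_le_cmi m.joint_nonneg _ _ _ (fun ω => ω.2.2.2.2.2.2.1) _ _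
      (fun z => (z.1.1, z.1.2, z.2)) (by rintro ⟨⟨_, _⟩, _⟩ ⟨⟨_, _⟩, _⟩ h; simp_all)
      (fun _ => rfl) (fun z => (z.1.1, z.1.2, z.2))
      (by rintro ⟨⟨_, _⟩, _⟩ ⟨⟨_, _⟩, _⟩ h; simp_all) (fun _ => rfl)
  | true =>
    exact cmi_le_cmi m.joint_nonneg _ _ _ (fun ω => ω.2.2.2.2.2.2.1) _ _
      (fun z => (z.1.1, z.1.2.1, z.1.2.2, z.2))
      (by rintro ⟨⟨_, _, _⟩, _⟩ ⟨⟨_, _, _⟩, _⟩ h; simp_all)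
      (fun _ => rfl) (fun z => z) (fun _ _ h => h) (fun _ => rfl)

set_option synthInstance.maxSize 1000 in
/-- Comparison of `Model.info` with the mutual informations under a law `p` of more variables, of
which the model's joint law is a marginal. Those for a wrong first cloud centre (`info true _`)
contain the extra variable `W1`, which can only increase them. -/
lemma Model.info_bounds (m : Model S T Q W1 W2 X1 X2 Y) {Ω β : Type*} [Fintype Ω] [Fintype β]
    (p : Ω → ℝ) (e : Ω ≃ Omega8 S T Q W1 W2 X1 X2 Y × β)
    (hj : ∀ z, m.joint z = ∑ b, p (e.symm (z, b))) :
    m.entS = margEnt p (fun ω => (e ω).1.2.1) ∧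
    cmi p (fun ω => ((e ω).1.2.1, (e ω).1.2.2.2.2.2.1)) (fun ω => (e ω).1.2.2.2.1)
      (fun ω => ((e ω).1.1, (e ω).1.2.2.2.2.1, (e ω).1.2.2.2.2.2.2.1)) ≤ m.info false false ∧
    cmi p (fun ω => ((e ω).1.2.1, (e ω).1.2.2.2.2.2.1)) (fun ω => (e ω).1.2.2.2.1)
      (fun ω => ((e ω).1.1, (e ω).1.2.2.2.2.2.2.1)) ≤ m.info true false ∧
    cmi p (fun ω => ((e ω).1.2.1, (e ω).1.2.2.2.2.2.2.1, (e ω).1.2.2.2.2.2.1))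
      (fun ω => (e ω).1.2.2.2.1) (fun ω => ((e ω).1.1, (e ω).1.2.2.2.2.1)) ≤ m.info false true ∧
    cmi p (fun ω => ((e ω).1.2.1, (e ω).1.2.2.2.2.2.2.1, (e ω).1.2.2.2.2.2.1))
      (fun ω => (e ω).1.2.2.2.1) (fun ω => (e ω).1.1) ≤ m.info true true ∧
    cmi p (fun ω => ((e ω).1.2.2.2.2.2.2.1, (e ω).1.2.1, (e ω).1.2.2.2.2.2.1))
      (fun ω => (e ω).1.2.2.2.1) (fun ω => (e ω).1.1) ≤ m.info true true := by
  set π : Ω → Omega8 S T Q W1 W2 X1 X2 Y := fun ω => (e ω).1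
  replace hj : m.joint = pm p π := funext fun z => by rw [hj, pm_equiv]
  have hn := m.joint_nonneg
  refine ⟨?_, ?_, ?_, ?_, ?_, ?_⟩
  · rw [Model.entS, hj, margEnt_pm]
  · rw [Model.info, hj, cmi_pm]
    rfl
  · have h := cmi_mono hn (fun ω => (ω.2.1, ω.2.2.2.2.2.1)) out8
      (fun ω => (ω.1, ω.2.2.2.2.2.2.1)) (fun ω => ω.2.2.2.2.1)
      (fun ω => (ω.2.1, ω.2.2.2.2.1, ω.2.2.2.2.2.1)) (fun z => (z.1.1, z.2, z.1.2))
      (by rintro ⟨⟨_, _⟩, _⟩ ⟨⟨_, _⟩, _⟩ h; simp_all) (fun _ => rfl)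
    refine le_trans (le_of_eq ?_) h
    rw [hj, cmi_pm]
    rfl
  · have h := cmi_mono hn (fun ω => (ω.2.1, ω.2.2.2.2.2.2.1, ω.2.2.2.2.2.1)) out8
      (fun ω => (ω.1, ω.2.2.2.2.1)) (fun _ => ())
      (fun ω => (ω.2.1, ω.2.2.2.2.2.1, ω.2.2.2.2.2.2.1)) (fun z => (z.1.1, z.1.2.2, z.1.2.1))
      (by rintro ⟨⟨_, _, _⟩, _⟩ ⟨⟨_, _, _⟩, _⟩ h; simp_all) (fun _ => rfl)
    refine le_trans (le_of_eq ?_) h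
    rw [hj, cmi_pm]
    rfl
  · have h := cmi_mono hn (fun ω => (ω.2.1, ω.2.2.2.2.2.2.1, ω.2.2.2.2.2.1)) out8
      (fun ω => ω.1) (fun ω => ω.2.2.2.2.1)
      (fun ω => (ω.2.1, ω.2.2.2.2.1, ω.2.2.2.2.2.1, ω.2.2.2.2.2.2.1))
      (fun z => (z.1.1, z.2, z.1.2.2, z.1.2.1))
      (by rintro ⟨⟨_, _, _⟩, _⟩ ⟨⟨_, _, _⟩, _⟩ h; simp_all) (fun _ => rfl)
    refine le_trans (le_of_eq ?_) h
    rw [hj, cmi_pm]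
    rfl
  · have h := cmi_mono hn (fun ω => (ω.2.2.2.2.2.2.1, ω.2.1, ω.2.2.2.2.2.1)) out8
      (fun ω => ω.1) (fun ω => ω.2.2.2.2.1)
      (fun ω => (ω.2.1, ω.2.2.2.2.1, ω.2.2.2.2.2.1, ω.2.2.2.2.2.2.1))
      (fun z => (z.1.2.1, z.2, z.1.2.2, z.1.1))
      (by rintro ⟨⟨_, _, _⟩, _⟩ ⟨⟨_, _, _⟩, _⟩ h; simp_all) (fun _ => rfl)
    refine le_trans (le_of_eq ?_) h
    rw [hj, cmi_pm]
    rfl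

/-- Fourier-Motzkin elimination of the two rates. In the application `A`, `B`, `C`, `D` are
`info false false`, `info false true`, `info true true` and `info true false` at the two receivers;
the comparisons `A ≤ B` and `D ≤ C` make the remaining Fourier-Motzkin conditions redundant. -/
lemma exists_rates {HS HT A1 B1 C1 D1 A2 B2 C2 D2 : ℝ} (hAB1 : A1 ≤ B1) (hAB2 : A2 ≤ B2)
    (hDC1 : D1 ≤ C1) (hDC2 : D2 ≤ C2) (h1 : HS < D1) (h2 : HT < D2) (h3 : HS + HT < A1 + C2)
    (h4 : HS + HT < A2 + C1) (h5 : HS + HT < B1 + B2) (h6 : 2 * HS + HT < A1 + C1 + B2)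
    (h7 : HS + 2 * HT < A2 + C2 + B1) :
    ∃ r1 r2 : ℝ, 0 ≤ r1 ∧ 0 ≤ r2 ∧ HS - A1 < r1 ∧ HS - B1 < r1 - r2 ∧ r2 < C1 - HS ∧
      HT - A2 < r2 ∧ HT - B2 < r2 - r1 ∧ r1 < C2 - HT := by
  obtain ⟨r2, ha, hb⟩ : ∃ r2, max (max (HS + HT - A1 - B2) (HT - B2)) (max (HT - A2) 0) < r2 ∧
      r2 < min (C1 - HS) (B1 + C2 - HS - HT) := by
    refine exists_between ?_
    simp only [max_lt_iff, lt_min_iff]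
    refine ⟨⟨⟨?_, ?_⟩, ?_, ?_⟩, ⟨?_, ?_⟩, ?_, ?_⟩ <;> linarith
  simp only [max_lt_iff, lt_min_iff] at ha hb
  obtain ⟨r1, hc, hd⟩ : ∃ r1, max (max (HS - A1) (HS - B1 + r2)) 0 < r1 ∧
      r1 < min (r2 - HT + B2) (C2 - HT) := by
    refine exists_between ?_
    simp only [max_lt_iff, lt_min_iff]
    refine ⟨⟨⟨?_, ?_⟩, ?_⟩, ⟨?_, ?_⟩, ?_⟩ <;> linarith
  simp only [max_lt_iff, lt_min_iff] at hc hd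
  refine ⟨r1, r2, ?_, ?_, ?_, ?_, ?_, ?_, ?_, ?_⟩ <;> linarith

end Rates

/-! ### The admissibility criterion -/

/-- **Corollary 1.**  For a source `(S,T)` with no (i.e. only a trivial) common part,
if there exist auxiliary random variables `Q, W1, W2` and channel inputs `X1, X2` whose
joint distribution with `(S,T)` factors as
`p(s,t)·p(q)·p(w1|q)·p(w2|q)·p(x1|s,w1,q)·p(x2|t,w2,q)` and the seven information
inequalities below hold, then the source is admissible for the interference channel. -/
theorem interference_channel_correlated_sources_corollary1
    {S T Q W1 W2 X1 X2 Y1 Y2 : Type*}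
    [Fintype S] [Fintype T] [Fintype Q] [Fintype W1] [Fintype W2]
    [Fintype X1] [Fintype X2] [Fintype Y1] [Fintype Y2]
    [DecidableEq S] [DecidableEq T] [DecidableEq Q] [DecidableEq W1]
    [DecidableEq W2] [DecidableEq X1] [DecidableEq X2] [DecidableEq Y1] [DecidableEq Y2]
    -- the source
    (pST : S → T → ℝ) (hpSTnn : ∀ s t, 0 ≤ pST s t) (hpSTsum : ∑ s : S, ∑ t : T, pST s t = 1)
    -- the source has no (only a trivial) Gacs-Korner-Witsenhausen common part
    (hNoCommon : ∀ (K : Type) (f : S → K) (g : T → K),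
      (∀ s t, pST s t ≠ 0 → f s = g t) →
      ∀ s s', (∃ t, pST s t ≠ 0) → (∃ t', pST s' t' ≠ 0) → f s = f s')
    -- the channel
    (chan : X1 → X2 → Y1 → Y2 → ℝ) (hchannn : ∀ x1 x2 y1 y2, 0 ≤ chan x1 x2 y1 y2)
    (hchansum : ∀ x1 x2, ∑ y1 : Y1, ∑ y2 : Y2, chan x1 x2 y1 y2 = 1)
    -- the auxiliary conditional distributions
    (pQ : Q → ℝ) (hpQnn : ∀ q, 0 ≤ pQ q) (hpQsum : ∑ q : Q, pQ q = 1)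
    (pW1 : Q → W1 → ℝ) (hpW1nn : ∀ q w1, 0 ≤ pW1 q w1)
    (hpW1sum : ∀ q, ∑ w1 : W1, pW1 q w1 = 1)
    (pW2 : Q → W2 → ℝ) (hpW2nn : ∀ q w2, 0 ≤ pW2 q w2)
    (hpW2sum : ∀ q, ∑ w2 : W2, pW2 q w2 = 1)
    (pX1 : S → W1 → Q → X1 → ℝ) (hpX1nn : ∀ s w1 q x1, 0 ≤ pX1 s w1 q x1)
    (hpX1sum : ∀ s w1 q, ∑ x1 : X1, pX1 s w1 q x1 = 1)
    (pX2 : T → W2 → Q → X2 → ℝ) (hpX2nn : ∀ t w2 q x2, 0 ≤ pX2 t w2 q x2)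
    (hpX2sum : ∀ t w2 q, ∑ x2 : X2, pX2 t w2 q x2 = 1)
    -- the joint distribution of all the variables
    (p : Omega9 S T Q W1 W2 X1 X2 Y1 Y2 → ℝ)
    (hp : ∀ s t q w1 w2 x1 x2 y1 y2,
      p (s, t, q, w1, w2, x1, x2, y1, y2) =
        pST s t * pQ q * pW1 q w1 * pW2 q w2 * pX1 s w1 q x1 * pX2 t w2 q x2 *
          chan x1 x2 y1 y2)
    -- the seven inequalities
    (h1 : margEnt p zS <
      cmi p (fun ω => (zS ω, zX1 ω)) zY1 (fun ω => (zQ ω, zW2 ω)))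
    (h2 : margEnt p zT <
      cmi p (fun ω => (zT ω, zX2 ω)) zY2 (fun ω => (zQ ω, zW1 ω)))
    (h3 : margEnt p zS + margEnt p zT <
      cmi p (fun ω => (zS ω, zX1 ω)) zY1 (fun ω => (zQ ω, zW1 ω, zW2 ω))
        + cmi p (fun ω => (zW1 ω, zT ω, zX2 ω)) zY2 zQ)
    (h4 : margEnt p zS + margEnt p zT <
      cmi p (fun ω => (zT ω, zX2 ω)) zY2 (fun ω => (zQ ω, zW1 ω, zW2 ω))
        + cmi p (fun ω => (zW2 ω, zS ω, zX1 ω)) zY1 zQ)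
    (h5 : margEnt p zS + margEnt p zT <
      cmi p (fun ω => (zS ω, zW2 ω, zX1 ω)) zY1 (fun ω => (zQ ω, zW1 ω))
        + cmi p (fun ω => (zT ω, zW1 ω, zX2 ω)) zY2 (fun ω => (zQ ω, zW2 ω)))
    (h6 : 2 * margEnt p zS + margEnt p zT <
      cmi p (fun ω => (zS ω, zX1 ω)) zY1 (fun ω => (zQ ω, zW1 ω, zW2 ω))
        + cmi p (fun ω => (zS ω, zW2 ω, zX1 ω)) zY1 zQ
        + cmi p (fun ω => (zT ω, zW1 ω, zX2 ω)) zY2 (fun ω => (zQ ω, zW2 ω)))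
    (h7 : margEnt p zS + 2 * margEnt p zT <
      cmi p (fun ω => (zT ω, zX2 ω)) zY2 (fun ω => (zQ ω, zW1 ω, zW2 ω))
        + cmi p (fun ω => (zT ω, zW1 ω, zX2 ω)) zY2 zQ
        + cmi p (fun ω => (zS ω, zW2 ω, zX1 ω)) zY1 (fun ω => (zQ ω, zW1 ω))) :
    ICAdmissible pST chan := by
  let m : Model S T Q W1 W2 X1 X2 (Y1 × Y2) :=
    { pST := pST
      pST_nonneg := hpSTnn
      pST_sum := hpSTsum
      V := fun x1 x2 y => chan x1 x2 y.1 y.2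
      V_nonneg := fun _ _ _ => hchannn _ _ _ _
      V_sum := fun x1 x2 => by rw [← hchansum x1 x2, Fintype.sum_prod_type]
      pQ := pQ
      pQ_nonneg := hpQnn
      pQ_sum := hpQsum
      pW1 := pW1
      pW1_nonneg := hpW1nn
      pW1_sum := hpW1sum
      pW2 := pW2
      pW2_nonneg := hpW2nn
      pW2_sum := hpW2sum
      pX1 := pX1
      pX1_nonneg := hpX1nn
      pX1_sum := hpX1sum
      pX2 := pX2
      pX2_nonneg := hpX2nn
      pX2_sum := hpX2sum }
  let e1 : Omega9 S T Q W1 W2 X1 X2 Y1 Y2 ≃ Omega8 S T Q W1 W2 X1 X2 Y1 × Y2 :=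
    { toFun := fun ω =>
        ((zQ ω, zS ω, zT ω, zY1 ω, zW1 ω, zX1 ω, zW2 ω, zX2 ω), zY2 ω)
      invFun := fun z => (z.1.2.1, z.1.2.2.1, z.1.1, z.1.2.2.2.2.1, z.1.2.2.2.2.2.2.1,
        z.1.2.2.2.2.2.1, z.1.2.2.2.2.2.2.2, z.1.2.2.2.1, z.2)
      left_inv := fun _ => rfl
      right_inv := fun _ => rfl }
  let e2 : Omega9 S T Q W1 W2 X1 X2 Y1 Y2 ≃ Omega8 T S Q W2 W1 X2 X1 Y2 × Y1 :=
    { toFun := fun ω =>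
        ((zQ ω, zT ω, zS ω, zY2 ω, zW2 ω, zX2 ω, zW1 ω, zX1 ω), zY1 ω)
      invFun := fun z => (z.1.2.2.1, z.1.2.1, z.1.1, z.1.2.2.2.2.2.2.1, z.1.2.2.2.2.1,
        z.1.2.2.2.2.2.2.2, z.1.2.2.2.2.2.1, z.2, z.1.2.2.2.1)
      left_inv := fun _ => rfl
      right_inv := fun _ => rfl }
  have hj1 : ∀ z, m.fst.joint z = ∑ b, p (e1.symm (z, b)) := by
    rintro ⟨q, s, t, y, w1, x1, w2, x2⟩
    change _ = ∑ b, p (s, t, q, w1, w2, x1, x2, y, b)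
    simp only [hp]
    rw [← Finset.mul_sum]
    change pQ q * pST s t * (∑ y2, chan x1 x2 y y2) * (pW1 q w1 * pX1 s w1 q x1) *
      (pW2 q w2 * pX2 t w2 q x2) = _
    ring
  have hj2 : ∀ z, m.swap.fst.joint z = ∑ b, p (e2.symm (z, b)) := by
    rintro ⟨q, t, s, y, w2, x2, w1, x1⟩
    change _ = ∑ b, p (s, t, q, w1, w2, x1, x2, b, y)
    simp only [hp]
    rw [← Finset.mul_sum]
    change pQ q * pST s t * (∑ y1, chan x1 x2 y1 y) * (pW2 q w2 * pX2 t w2 q x2) *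
      (pW1 q w1 * pX1 s w1 q x1) = _
    ring
  obtain ⟨hS, hA1, hD1, hB1, hC1, hC1'⟩ := m.fst.info_bounds p e1 hj1
  obtain ⟨hT, hA2, hD2, hB2, hC2, hC2'⟩ := m.swap.fst.info_bounds p e2 hj2
  change _ = margEnt p zS at hS
  change _ = margEnt p zT at hT
  rw [← hS] at h1 h3 h4 h5 h6 h7
  rw [← hT] at h2 h3 h4 h5 h6 h7
  have hp0 : ∀ ω, 0 ≤ p ω := by
    rintro ⟨s, t, q, w1, w2, x1, x2, y1, y2⟩
    rw [hp]
    exact mul_nonneg (mul_nonneg (mul_nonneg (mul_nonneg (mul_nonneg (mul_nonneg (hpSTnn _ _)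
      (hpQnn _)) (hpW1nn _ _)) (hpW2nn _ _)) (hpX1nn _ _ _ _)) (hpX2nn _ _ _ _)) (hchannn _ _ _ _)
  -- The second receiver conditions on `W2, W1` rather than on `W1, W2`.
  have hA2' : cmi p (fun ω => (zT ω, zX2 ω)) zY2 (fun ω => (zQ ω, zW1 ω, zW2 ω)) ≤
      m.swap.fst.info false false := by
    refine le_trans ?_ hA2
    exact cmi_le_cmi hp0 (fun ω => (zT ω, zX2 ω)) zY2 (fun ω => (zQ ω, zW2 ω, zW1 ω)) (fun _ => ())
      _ _ Prod.fst (fun _ _ h => Prod.ext h rfl) (fun _ => rfl)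
      (fun z => (z.1.1, z.1.2.2, z.1.2.1)) (by rintro ⟨⟨_, _, _⟩, _⟩ ⟨⟨_, _, _⟩, _⟩ h; simp_all)
      fun _ => rfl
  obtain ⟨r1, r2, hr1, hr2, g1, g2, g3, g4, g5, g6⟩ := exists_rates
    (m.fst.info_le_info false) (m.swap.fst.info_le_info false)
    (m.fst.info_le_info true) (m.swap.fst.info_le_info true)
    (h1.trans_le hD1) (h2.trans_le hD2)
    (h3.trans_le (add_le_add hA1 hC2')) (h4.trans_le (add_le_add hA2' hC1'))
    (h5.trans_le (add_le_add hB1 hB2))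
    (h6.trans_le (add_le_add (add_le_add hA1 hC1) hB2))
    (h7.trans_le (add_le_add (add_le_add hA2' hC2) hB1))
  have h1' := h1.trans_le hD1
  have h2' := h2.trans_le hD2
  refine m.admissible hr1 hr2 (fun σ1 σ2 => ?_) fun σ1 σ2 => ?_ <;>
    cases σ1 <;> cases σ2 <;> simp only [cond_true, cond_false] <;> linarith
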